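/- arXiv:2202.10120 — 8 statements merged into one kernel-verified Lean document; each statement's English description precedes it below -/
import Mathlib

section
/- Let p be an odd prime, let n ≥ 2, and let K be a field of characteristic p. Let U, V, W be K-vector spaces, let B : U → V → W be K-bilinear, and let g : U → U and h : V → V be K-linear maps satisfying g^p = id and h^p = id. Then for all u ∈ U and v ∈ V: ∑_{0 ≤ i < j ≤ p^n − 1} B (g^i u) (h^j v) = 0. -/
/-!
Cut the square `[0, m * d) × [0, m * d)` into `m ^ 2` blocks of side `d`. Its strict upper triangle
consists of `m` diagonal blocks, of which only the strict upper triangles count, and of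
`m.choose 2` full blocks above the diagonal. The summand has period `d` in both indices, so all
diagonal blocks contribute the same amount, and so do all full blocks. For `d = p` and
`m = p ^ (n - 1)` with `n ≥ 2`, both multiplicities are divisible by `p` if `p` is odd, or if
`n ≥ 3`, and multiplication by `p` is zero on `W`.
-/

open Finset Function

theorem apply_mul_add_of_periodic {α : Type*} {f : ℕ → α} {d : ℕ} (hf : Periodic f d) (m i : ℕ) :
    f (m * d + i) = f i := by
  rw [add_comm, ← smul_eq_mul]
  exact hf.nsmul m i

section PeriodicSums

variable {W : Type*} [AddCommMonoid W] {d : ℕ}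

theorem sum_range_mul_of_periodic {f : ℕ → W} (hf : Periodic f d) (m : ℕ) :
    ∑ i ∈ range (m * d), f i = m • ∑ i ∈ range d, f i := by
  induction m with
  | zero => simp
  | succ m ih =>
    simp only [Nat.succ_mul, sum_range_add, ih, apply_mul_add_of_periodic hf, succ_nsmul]

theorem sum_sum_range_mul_of_periodic {F : ℕ → ℕ → W} (hfst : ∀ j, Periodic (F · j) d)
    (hsnd : ∀ i, Periodic (F i) d) (m : ℕ) :
    ∑ j ∈ range (m * d), ∑ i ∈ range j, F i j =
      m • ∑ j ∈ range d, ∑ i ∈ range j, F i j +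
        m.choose 2 • ∑ j ∈ range d, ∑ i ∈ range d, F i j := by
  induction m with
  | zero => simp
  | succ m ih =>
    have next_column (j : ℕ) : ∑ i ∈ range (m * d + j), F i (m * d + j) =
        m • ∑ i ∈ range d, F i j + ∑ i ∈ range j, F i j := by
      simp only [apply_mul_add_of_periodic (hsnd _), sum_range_add,
        sum_range_mul_of_periodic (hfst j), apply_mul_add_of_periodic (hfst j)]
    have choose_succ : (m + 1).choose 2 = m + m.choose 2 := by
      rw [Nat.choose_succ_succ', Nat.choose_one_right]
    simp only [Nat.succ_mul, sum_range_add, ih, next_column, sum_add_distrib, ← smul_sum,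
      choose_succ, add_smul, one_smul]
    abel

theorem sum_filter_lt_range_product (F : ℕ → ℕ → W) (N : ℕ) :
    ∑ ij ∈ (range N ×ˢ range N).filter (fun ij => ij.1 < ij.2), F ij.1 ij.2 =
      ∑ j ∈ range N, ∑ i ∈ range j, F i j :=
  sum_finset_product_right' _ (range N) range (by grind)

end PeriodicSums

theorem dvd_choose_two_pow_succ {p m : ℕ} (h : Odd p ∨ m ≠ 0) : p ∣ (p ^ (m + 1)).choose 2 := by
  have two_dvd : 2 ∣ p ^ m * (p ^ (m + 1) - 1) := by
    rw [← even_iff_two_dvd]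
    rcases Nat.even_or_odd p with hp | hp
    · have hm : m ≠ 0 := h.resolve_left (Nat.not_odd_iff_even.mpr hp)
      exact (hp.pow_of_ne_zero hm).mul_right _
    · exact (hp.pow.tsub_odd odd_one).mul_left _
  rw [Nat.choose_two_right]
  apply Nat.dvd_div_of_mul_dvd
  calc 2 * p ∣ p ^ m * (p ^ (m + 1) - 1) * p := mul_dvd_mul_right two_dvd p
    _ = p ^ (m + 1) * (p ^ (m + 1) - 1) := by rw [mul_right_comm, ← pow_succ]

theorem periodic_iterate_apply {α : Type*} {g : α → α} {d : ℕ} {x : α} (hx : IsPeriodicPt g d x) :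
    Periodic (fun i => g^[i] x) d := fun i =>
  (iterate_add_apply g i d x).trans (congrArg g^[i] hx.eq)

theorem isPeriodicPt_of_pow_eq_one {R M : Type*} [Semiring R] [AddCommMonoid M] [Module R M]
    {g : Module.End R M} {d : ℕ} (hg : g ^ d = 1) (x : M) : IsPeriodicPt g d x := by
  rw [IsPeriodicPt, IsFixedPt, ← Module.End.pow_apply, hg, Module.End.one_apply]

theorem charP_nsmul_eq_zero (R : Type*) {M : Type*} [Semiring R] [AddCommMonoid M] [Module R M]
    (p : ℕ) [CharP R p] (x : M) : p • x = 0 := by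
  rw [← Nat.cast_smul_eq_nsmul R, CharP.cast_eq_zero, zero_smul]

theorem stmt3_general {U V W : Type*} [AddCommMonoid W] {p n : ℕ} (hn : 2 ≤ n)
    (hpn : Odd p ∨ 3 ≤ n) (hW : ∀ w : W, p • w = 0) (B : U → V → W) {g : U → U} {h : V → V}
    {u : U} {v : V} (hu : IsPeriodicPt g p u) (hv : IsPeriodicPt h p v) :
    ∑ ij ∈ (range (p ^ n) ×ˢ range (p ^ n)).filter (fun ij => ij.1 < ij.2),
      B (g^[ij.1] u) (h^[ij.2] v) = 0 := by
  have nsmul_eq_zero {c : ℕ} (hc : p ∣ c) (w : W) : c • w = 0 := by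
    obtain ⟨k, rfl⟩ := hc
    rw [mul_nsmul, hW, nsmul_zero]
  obtain ⟨m, rfl⟩ := Nat.exists_eq_add_of_le' hn
  have hpm : Odd p ∨ m ≠ 0 := hpn.imp_right (by omega)
  have hfst (j : ℕ) : Periodic (fun i => B (g^[i] u) (h^[j] v)) p :=
    (periodic_iterate_apply hu).comp (B · _)
  have hsnd (i : ℕ) : Periodic (fun j => B (g^[i] u) (h^[j] v)) p :=
    (periodic_iterate_apply hv).comp (B _)
  rw [sum_filter_lt_range_product (fun i j => B (g^[i] u) (h^[j] v)), pow_succ,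
    sum_sum_range_mul_of_periodic hfst hsnd, nsmul_eq_zero (dvd_pow_self p m.succ_ne_zero),
    nsmul_eq_zero (dvd_choose_two_pow_succ hpm), add_zero]

/-- Let `p` be an odd prime, `n ≥ 2`, and `K` a field of characteristic `p`.
Let `U, V, W` be `K`-vector spaces, `B : U → V → W` `K`-bilinear, and `g : U → U`,
`h : V → V` `K`-linear with `g^p = id` and `h^p = id`.  Then for all `u ∈ U`, `v ∈ V`,
`∑_{0 ≤ i < j ≤ p^n − 1} B (g^i u) (h^j v) = 0`. -/
theorem stmt3 (p n : ℕ) (hp : p.Prime) (hodd : Odd p) (hn : 2 ≤ n)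
    (K : Type*) [Field K] [CharP K p]
    (U V W : Type*) [AddCommGroup U] [Module K U] [AddCommGroup V] [Module K V]
    [AddCommGroup W] [Module K W]
    (B : U →ₗ[K] V →ₗ[K] W) (g : Module.End K U) (h : Module.End K V)
    (hg : g ^ p = 1) (hh : h ^ p = 1) (u : U) (v : V) :
    ∑ ij ∈ (Finset.range (p ^ n) ×ˢ Finset.range (p ^ n)).filter (fun ij => ij.1 < ij.2),
      B ((g ^ ij.1) u) ((h ^ ij.2) v) = 0 := by
  simpa only [Module.End.pow_apply] using stmt3_general hn (.inl hodd) (charP_nsmul_eq_zero K p)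
    (B · ·) (isPeriodicPt_of_pow_eq_one hg u) (isPeriodicPt_of_pow_eq_one hh v)
end

section
/- Let p be a prime and let K be a field of characteristic p. Set Z := ∏_{i=0}^{p−1} ((i : K)·X + Y) ∈ K[X,Y]. Then the family of polynomials {X^a · Y^b · Z^c : a, c ∈ ℕ, 0 ≤ b ≤ p − 1} is a basis of K[X,Y] as a K-vector space. -/
open MvPolynomial

/-!
Viewed in `K[X][Y]`, the product `Z` is monic of degree `p` in `Y`. By division with remainder,
every `n` is `b + p * c` for exactly one pair with `b < p`, so the products `Y ^ b * Z ^ c` contain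
exactly one polynomial of each degree `n`, and it is monic. They are thus triangular with respect
to the powers of `Y` and form a `K[X]`-basis of `K[X][Y]`; multiplying by the `K`-basis `X ^ a` of
`K[X]` gives a `K`-basis.
-/

section Univariate

open scoped Polynomial

theorem linearIndependent_of_isRightRegular_leadingCoeff {R : Type*} [Ring R]
    (S : Polynomial.Sequence R) (hS : ∀ i, IsRightRegular (S i).leadingCoeff) :
    LinearIndependent R S := by
  rw [linearIndependent_iff]
  intro c hc
  by_contra hne
  obtain ⟨n, hn, hmax⟩ :=
    c.support.exists_max_image id (Finsupp.support_nonempty_iff.mpr hne)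
  have coeff_eq_zero : ∀ i ∈ c.support, i ≠ n → (c i • S i).coeff n = 0 := fun i hi hin => by
    rw [Polynomial.coeff_smul, Polynomial.coeff_eq_zero_of_natDegree_lt, smul_zero]
    simpa using (hmax i hi).lt_of_ne hin
  have top_coeff : c n * (S n).leadingCoeff = 0 := calc
    c n * (S n).leadingCoeff = (c n • S n).coeff n := by
      rw [Polynomial.coeff_smul, smul_eq_mul, Polynomial.leadingCoeff, S.natDegree_eq]
    _ = (Finsupp.linearCombination R S c).coeff n := by
      rw [Finsupp.linearCombination_apply, Finsupp.sum, Polynomial.finsetSum_coeff,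
        Finset.sum_eq_single_of_mem n hn coeff_eq_zero]
    _ = 0 := by rw [hc, Polynomial.coeff_zero]
  exact Finsupp.mem_support_iff.mp hn ((hS n).mul_right_eq_zero_iff.mp top_coeff)

section Sequence

variable {A : Type*} [Semiring A] [Nontrivial A] {q : A[X]}

/-- The terms `X ^ b * q ^ c` of the expansions in powers of a monic polynomial `q`, ordered by
degree: `b` and `c` are the remainder and the quotient of the degree by `q.natDegree`. -/
noncomputable def adicSequence (hq : q.Monic) : Polynomial.Sequence A where
  elems' n := Polynomial.X ^ (n % q.natDegree) * q ^ (n / q.natDegree)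
  degree_eq' n := by
    rw [(hq.pow _).degree_mul, Polynomial.degree_X_pow,
      Polynomial.degree_eq_natDegree (hq.pow _).ne_zero, hq.natDegree_pow, ← Nat.cast_add,
      Nat.mod_add_div']

theorem adicSequence_apply (hq : q.Monic) (n : ℕ) :
    adicSequence hq n = Polynomial.X ^ (n % q.natDegree) * q ^ (n / q.natDegree) :=
  rfl

theorem monic_adicSequence (hq : q.Monic) (n : ℕ) : (adicSequence hq n).Monic :=
  (Polynomial.monic_X_pow _).mul (hq.pow _)

end Sequence

variable {A : Type*} [Ring A] [Nontrivial A] {q : A[X]}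

/-- The basis `X ^ b * q ^ c`, with `b < q.natDegree`, of `A[X]` given by expansion in powers of a
nonconstant monic polynomial `q`. -/
noncomputable def adicBasis (hq : q.Monic) [NeZero q.natDegree] :
    Module.Basis (Fin q.natDegree × ℕ) A A[X] :=
  (Module.Basis.mk
    (linearIndependent_of_isRightRegular_leadingCoeff (adicSequence hq) fun n => by
      rw [monic_adicSequence hq n]; exact isRegular_one.right)
    ((adicSequence hq).span fun n => by
      rw [monic_adicSequence hq n]; exact isUnit_one).ge).reindex
    ((Nat.divModEquiv q.natDegree).trans (Equiv.prodComm _ _))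

theorem adicBasis_apply (hq : q.Monic) [NeZero q.natDegree] (b : Fin q.natDegree) (c : ℕ) :
    adicBasis hq (b, c) = Polynomial.X ^ (b : ℕ) * q ^ c := by
  have hmod : (c * q.natDegree + b) % q.natDegree = b := Nat.mul_add_mod_of_lt b.isLt
  have hdiv : (c * q.natDegree + b) / q.natDegree = c :=
    congrArg Prod.fst ((Nat.divModEquiv q.natDegree).apply_symm_apply (c, b))
  simp [adicBasis, adicSequence_apply, hmod, hdiv]

end Univariate

section Bivariate

open scoped Polynomial

open Polynomial.Bivariate (equivMvPolynomial)

section Basis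

variable {R : Type*} [CommRing R] [Nontrivial R] {Z : MvPolynomial (Fin 2) R}

/-- The basis `X ^ a * Y ^ b * Z ^ c`, with `b` less than the `Y`-degree of `Z`, of `R[X, Y]` for a
polynomial `Z` that is monic and nonconstant in `Y`. Here `Y` is `X 1`, the outer variable of
`R[X][X]` under `equivMvPolynomial`. -/
noncomputable def bivariateAdicBasis (hZ : ((equivMvPolynomial R).symm Z).Monic)
    [NeZero ((equivMvPolynomial R).symm Z).natDegree] :
    Module.Basis (ℕ × Fin ((equivMvPolynomial R).symm Z).natDegree × ℕ) R
      (MvPolynomial (Fin 2) R) :=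
  ((Polynomial.basisMonomials R).smulTower (adicBasis hZ)).map
    (equivMvPolynomial R).toLinearEquiv

theorem bivariateAdicBasis_apply (hZ : ((equivMvPolynomial R).symm Z).Monic)
    [NeZero ((equivMvPolynomial R).symm Z).natDegree] (a : ℕ)
    (b : Fin ((equivMvPolynomial R).symm Z).natDegree) (c : ℕ) :
    bivariateAdicBasis hZ (a, b, c) = X 0 ^ a * X 1 ^ (b : ℕ) * Z ^ c := by
  simp [bivariateAdicBasis, Module.Basis.smulTower_apply, adicBasis_apply,
    Polynomial.monomial_one_right_eq_X_pow, Polynomial.smul_eq_C_mul, mul_assoc]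

end Basis

section LinearForms

variable {R ι : Type*} [CommSemiring R] (s : Finset ι) (r : ι → R)

theorem equivMvPolynomial_symm_prod_smul_X_add_X :
    (equivMvPolynomial R).symm (∏ i ∈ s, (r i • X 0 + X 1)) =
      ∏ i ∈ s, (Polynomial.X + Polynomial.C (r i • Polynomial.X)) := by
  simp only [map_prod, map_add, map_smul, Polynomial.Bivariate.equivMvPolynomial_symm_X_0,
    Polynomial.Bivariate.equivMvPolynomial_symm_X_1, Polynomial.smul_C, add_comm]

theorem monic_equivMvPolynomial_symm_prod_smul_X_add_X :
    ((equivMvPolynomial R).symm (∏ i ∈ s, (r i • X 0 + X 1))).Monic := by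
  rw [equivMvPolynomial_symm_prod_smul_X_add_X]
  exact Polynomial.monic_prod_of_monic _ _ fun i _ => Polynomial.monic_X_add_C _

theorem natDegree_equivMvPolynomial_symm_prod_smul_X_add_X [Nontrivial R] :
    ((equivMvPolynomial R).symm (∏ i ∈ s, (r i • X 0 + X 1))).natDegree = s.card := by
  rw [equivMvPolynomial_symm_prod_smul_X_add_X,
    Polynomial.natDegree_prod_of_monic _ _ fun i _ => Polynomial.monic_X_add_C _]
  simp only [Polynomial.natDegree_X_add_C, Finset.sum_const, smul_eq_mul, mul_one]

end LinearForms

theorem stmt5_general {R : Type*} [CommRing R] {d : ℕ} (hd : d ≠ 0) {Z : MvPolynomial (Fin 2) R}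
    (hZ : ((equivMvPolynomial R).symm Z).Monic)
    (hZd : ((equivMvPolynomial R).symm Z).natDegree = d)
    (f : ℕ × Fin d × ℕ → MvPolynomial (Fin 2) R)
    (hf : ∀ a (b : Fin d) c, f (a, b, c) = X 0 ^ a * X 1 ^ (b : ℕ) * Z ^ c) :
    LinearIndependent R f ∧ Submodule.span R (Set.range f) = ⊤ := by
  subst hZd
  have : NeZero ((equivMvPolynomial R).symm Z).natDegree := ⟨hd⟩
  nontriviality R
  have hfB : f = bivariateAdicBasis hZ :=
    funext fun ⟨a, b, c⟩ => (hf a b c).trans (bivariateAdicBasis_apply hZ a b c).symm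
  rw [hfB]
  exact ⟨(bivariateAdicBasis hZ).linearIndependent, (bivariateAdicBasis hZ).span_eq⟩

end Bivariate

/-- Let `p` be a prime and `K` a field of characteristic `p`.  Set
`Z = ∏_{i=0}^{p−1} ((i : K)·X + Y) ∈ K[X,Y]`.  Then the family
`{X^a · Y^b · Z^c : a, c ∈ ℕ, 0 ≤ b ≤ p − 1}` is a `K`-vector space basis of `K[X,Y]`. -/
theorem stmt5 (p : ℕ) (hp : p.Prime) (K : Type*) [Field K] [CharP K p]
    (f : ℕ × Fin p × ℕ → MvPolynomial (Fin 2) K)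
    (hf : ∀ a (b : Fin p) c, f (a, b, c) =
      X 0 ^ a * X 1 ^ (b : ℕ) *
        (∏ i ∈ Finset.range p, ((i : K) • X 0 + X 1)) ^ c) :
    LinearIndependent K f ∧
      Submodule.span K (Set.range f) = (⊤ : Submodule K (MvPolynomial (Fin 2) K)) :=
  stmt5_general hp.ne_zero (monic_equivMvPolynomial_symm_prod_smul_X_add_X _ _)
    ((natDegree_equivMvPolynomial_symm_prod_smul_X_add_X _ _).trans (Finset.card_range p)) f hf
end

section
/- Let p be an odd prime and let K be a field of characteristic p. Let φ be the K-algebra endomorphism of K[X,Y] determined by φ(X) = X and φ(Y) = X + Y. If f ∈ K[X,Y] satisfies φ(f) = f and the degree of f in the variable Y is at most p − 1, then f lies in the image of K[X] in K[X,Y], i.e. f is a polynomial in X alone. -/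
open MvPolynomial

/-!
View `f` as a polynomial of degree `n` in `Y` over `R[X]`, with leading coefficient `c`. The
substitution `Y ↦ Y + a` changes the coefficient of `Y ^ (n - 1)` by `n • (c * a)`, so if it
fixes `f` then `n • (c * a) = 0`. When `a` and `n` are not zero divisors this forces `n = 0`.
For `0 < n < p` the integer `n` is invertible in characteristic `p`.
-/

open Polynomial.Bivariate
open scoped Polynomial

section Taylor

theorem coeff_taylor_of_natDegree_eq_succ {A : Type*} [Semiring A] (a : A) {F : A[X]} {n : ℕ}
    (hF : F.natDegree = n + 1) :
    (F.taylor a).coeff n = F.coeff n + (n + 1) • (F.leadingCoeff * a) := by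
  have hdeg : (F.hasseDeriv n).natDegree < 2 := by
    have := F.natDegree_hasseDeriv_le n
    lia
  rw [Polynomial.taylor_coeff, Polynomial.eval_eq_sum_range' hdeg, Polynomial.leadingCoeff, hF]
  simp [Finset.sum_range_succ, Polynomial.hasseDeriv_coeff, add_comm 1 n, mul_assoc, nsmul_eq_mul]

variable {A : Type*} [Ring A] {a : A} {F : A[X]}

theorem natDegree_nsmul_leadingCoeff_mul_eq_zero_of_taylor_eq_self (hF : F.taylor a = F) :
    F.natDegree • (F.leadingCoeff * a) = 0 := by
  cases hn : F.natDegree with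
  | zero => exact zero_nsmul _
  | succ n =>
    have hcoeff := coeff_taylor_of_natDegree_eq_succ a hn
    rwa [hF, left_eq_add] at hcoeff

theorem natDegree_eq_zero_of_taylor_eq_self (ha : IsRightRegular a)
    (hdeg : F.natDegree ≠ 0 → IsSMulRegular A F.natDegree) (hF : F.taylor a = F) :
    F.natDegree = 0 := by
  by_contra hn
  have hmul : F.leadingCoeff * a = 0 :=
    (hdeg hn).right_eq_zero_of_smul
      (natDegree_nsmul_leadingCoeff_mul_eq_zero_of_taylor_eq_self hF)
  have hlead : F.leadingCoeff = 0 := ha.mul_right_eq_zero_iff.mp hmul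
  exact hn (by rw [Polynomial.leadingCoeff_eq_zero.mp hlead, Polynomial.natDegree_zero])

end Taylor

theorem isSMulRegular_of_not_dvd_char {R : Type*} [Ring R] {p n : ℕ} [CharP R p]
    (hp : p.Prime) (hn : ¬p ∣ n) : IsSMulRegular R n := by
  have hunit : IsUnit (n : R) := (CharP.isUnit_natCast_iff hp).mpr hn
  intro x y hxy
  simpa only [nsmul_eq_mul, hunit.mul_right_inj] using hxy

section Bivariate

variable {R : Type*} [CommSemiring R]

theorem equivMvPolynomial_C (g : R[X]) :
    equivMvPolynomial R (Polynomial.C g) = Polynomial.aeval (X 0) g :=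
  Polynomial.aevalAeval_C _ _ g

theorem equivMvPolynomial_symm_aeval_X_zero (g : R[X]) :
    (equivMvPolynomial R).symm (Polynomial.aeval (X 0) g) = Polynomial.C g := by
  rw [← equivMvPolynomial_C, AlgEquiv.symm_apply_apply]

theorem equivMvPolynomial_symm_eq_map_finSuccEquiv (f : MvPolynomial (Fin 2) R) :
    (equivMvPolynomial R).symm f =
      (finSuccEquiv R 1 (rename (Equiv.swap 0 1) f)).map (uniqueAlgEquiv R (Fin 1)) := by
  have hcomp : (equivMvPolynomial R).symm.toAlgHom =
      (Polynomial.mapAlgHom (uniqueAlgEquiv R (Fin 1)).toAlgHom).comp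
        ((finSuccEquiv R 1).toAlgHom.comp (rename (Equiv.swap 0 1))) := by
    ext i : 1
    fin_cases i
    · have hX_one : finSuccEquiv R 1 (X 1) = Polynomial.C (X 0) :=
        finSuccEquiv_X_succ (j := 0)
      simp [hX_one]
    · simp [finSuccEquiv_X_zero]
  exact DFunLike.congr_fun hcomp f

theorem natDegree_equivMvPolynomial_symm (f : MvPolynomial (Fin 2) R) :
    ((equivMvPolynomial R).symm f).natDegree = degreeOf 1 f := by
  rw [equivMvPolynomial_symm_eq_map_finSuccEquiv,
    Polynomial.natDegree_map_eq_of_injective (uniqueAlgEquiv R (Fin 1)).injective,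
    natDegree_finSuccEquiv]
  exact degreeOf_rename_of_injective (Equiv.swap 0 1).injective 1

theorem equivMvPolynomial_symm_shear
    {φ : MvPolynomial (Fin 2) R →ₐ[R] MvPolynomial (Fin 2) R} {a : R[X]}
    (hX : φ (X 0) = X 0) (hY : φ (X 1) = Polynomial.aeval (X 0) a + X 1)
    (f : MvPolynomial (Fin 2) R) :
    (equivMvPolynomial R).symm (φ f) = ((equivMvPolynomial R).symm f).taylor a := by
  have hcomp : (equivMvPolynomial R).symm.toAlgHom.comp φ =
      ((Polynomial.taylorAlgHom a).restrictScalars R).comp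
        (equivMvPolynomial R).symm.toAlgHom := by
    ext i : 1
    fin_cases i
    · simp [hX]
    · simp [hY, equivMvPolynomial_symm_aeval_X_zero, add_comm]
  exact DFunLike.congr_fun hcomp f

end Bivariate

theorem stmt6_general {R : Type*} [CommRing R] {a : R[X]} (ha : IsRegular a)
    {φ : MvPolynomial (Fin 2) R →ₐ[R] MvPolynomial (Fin 2) R}
    (hX : φ (X 0) = X 0) (hY : φ (X 1) = Polynomial.aeval (X 0) a + X 1)
    {f : MvPolynomial (Fin 2) R} (hfix : φ f = f)
    (hdeg : degreeOf 1 f ≠ 0 → IsSMulRegular R (degreeOf 1 f)) :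
    ∃ g : R[X], f = Polynomial.aeval (X 0) g := by
  have hF : ((equivMvPolynomial R).symm f).taylor a = (equivMvPolynomial R).symm f := by
    rw [← equivMvPolynomial_symm_shear hX hY, hfix]
  rw [← natDegree_equivMvPolynomial_symm] at hdeg
  obtain ⟨g, hg⟩ := Polynomial.natDegree_eq_zero.mp <|
    natDegree_eq_zero_of_taylor_eq_self ha.right (fun hn ↦ (hdeg hn).polynomial) hF
  exact ⟨g, by rw [← equivMvPolynomial_C, hg, AlgEquiv.apply_symm_apply]⟩

/-- Let `p` be an odd prime and `K` a field of characteristic `p`.  Let `φ` be the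
`K`-algebra endomorphism of `K[X,Y]` with `φ(X) = X` and `φ(Y) = X + Y`.  If `f ∈ K[X,Y]`
satisfies `φ(f) = f` and `deg_Y f ≤ p − 1`, then `f` is a polynomial in `X` alone. -/
theorem stmt6 (p : ℕ) (hp : p.Prime) (hodd : Odd p) (K : Type*) [Field K] [CharP K p]
    (φ : MvPolynomial (Fin 2) K →ₐ[K] MvPolynomial (Fin 2) K)
    (hX : φ (X 0) = X 0) (hY : φ (X 1) = X 0 + X 1)
    (f : MvPolynomial (Fin 2) K) (hfix : φ f = f) (hdeg : degreeOf 1 f ≤ p - 1) :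
    ∃ g : Polynomial K, f = Polynomial.aeval (X 0 : MvPolynomial (Fin 2) K) g := by
  exact stmt6_general Polynomial.isRegular_X hX (by rwa [Polynomial.aeval_X]) hfix fun hn ↦
    isSMulRegular_of_not_dvd_char hp <|
      Nat.not_dvd_of_pos_of_lt (Nat.pos_of_ne_zero hn) (Nat.lt_of_le_pred hp.pos hdeg)
end

section
/- Let p be an odd prime and let K be a field of characteristic p. Let φ be the K-algebra endomorphism of K[X,Y] determined by φ(X) = X and φ(Y) = X + Y, and let W ⊆ K[X,Y] be the K-linear span of the monomials {X^a Y^b : a ≥ 0, 0 ≤ b ≤ p − 1}. Then the image (φ − id)(W) equals the K-linear span of the monomials {X^a Y^b : a ≥ 1, 0 ≤ b ≤ p − 2}. -/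
open MvPolynomial

/-!
If `φ x = x` and `φ y = x + y`, then `φ (x ^ a * y ^ (b + 1)) - x ^ a * y ^ (b + 1)` is
`(b + 1) x ^ (a + 1) y ^ b` plus multiples of monomials `x ^ c * y ^ j` with `c ≥ 1` and `j < b`.
So, sending exponent `b + 1` of `y` to exponent `b`, the map `φ - id` is triangular with diagonal
coefficients `1, …, n` for exponents up to `n`; these are invertible as soon as `n!` is, as happens
in characteristic `p` for `n = p - 1`.
-/

section Shift

variable {A : Type*} [CommRing A]

lemma pow_mul_add_pow_sub (x y : A) (a b : ℕ) :
    x ^ a * (x + y) ^ b - x ^ a * y ^ b =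
      ∑ j ∈ Finset.range b, b.choose j • (x ^ (a + (b - j)) * y ^ j) := by
  rw [← mul_sub, add_comm x y, add_pow, Finset.sum_range_succ, Nat.sub_self, pow_zero,
    Nat.choose_self, Nat.cast_one, mul_one, mul_one, add_sub_cancel_right, Finset.mul_sum]
  refine Finset.sum_congr rfl fun j _ ↦ ?_
  rw [nsmul_eq_mul]
  ring

lemma pow_mul_add_pow_succ_sub (x y : A) (a b : ℕ) :
    x ^ a * (x + y) ^ (b + 1) - x ^ a * y ^ (b + 1) =
      (∑ j ∈ Finset.range b, (b + 1).choose j • (x ^ (a + (b + 1 - j)) * y ^ j)) +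
        (b + 1) • (x ^ (a + 1) * y ^ b) := by
  rw [pow_mul_add_pow_sub, Finset.sum_range_succ, Nat.choose_succ_self_right,
    Nat.add_sub_cancel_left]

variable {R : Type*} [CommRing R] [Algebra R A] {x y : A} {n : ℕ}

lemma pow_succ_mul_pow_mem_of_pow_mul_add_pow_sub_mem {N : Submodule R A}
    (hn : IsUnit (n.factorial : R))
    (hN : ∀ a, ∀ b ≤ n, x ^ a * (x + y) ^ b - x ^ a * y ^ b ∈ N) (a : ℕ) {b : ℕ} (hb : b < n) :
    x ^ (a + 1) * y ^ b ∈ N := by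
  induction b using Nat.strong_induction_on generalizing a with
  | _ b ih =>
    have lower_terms_mem :
        ∑ j ∈ Finset.range b, (b + 1).choose j • (x ^ (a + (b + 1 - j)) * y ^ j) ∈ N := by
      refine N.sum_mem fun j hj ↦ nsmul_mem ?_ _
      have hjb : j < b := Finset.mem_range.1 hj
      rw [Nat.sub_add_comm hjb.le, ← add_assoc]
      exact ih j hjb _ (hjb.trans hb)
    have leading_term_mem : (b + 1) • (x ^ (a + 1) * y ^ b) ∈ N := by
      rw [← N.add_mem_iff_right lower_terms_mem, ← pow_mul_add_pow_succ_sub]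
      exact hN a (b + 1) hb
    have isUnit_succ : IsUnit ((b + 1 : ℕ) : R) :=
      isUnit_of_dvd_unit (Nat.cast_dvd_cast (Nat.dvd_factorial b.succ_pos hb)) hn
    rwa [← Nat.cast_smul_eq_nsmul R, N.smul_mem_iff_of_isUnit isUnit_succ] at leading_term_mem

lemma pow_mul_add_pow_sub_mem_span (a : ℕ) {b : ℕ} (hb : b ≤ n) :
    x ^ a * (x + y) ^ b - x ^ a * y ^ b ∈
      Submodule.span R {m : A | ∃ a b : ℕ, 1 ≤ a ∧ b < n ∧ m = x ^ a * y ^ b} := by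
  rw [pow_mul_add_pow_sub]
  refine Submodule.sum_mem _ fun j hj ↦ nsmul_mem ?_ _
  have hjb : j < b := Finset.mem_range.1 hj
  exact Submodule.subset_span ⟨a + (b - j), j, by omega, hjb.trans_le hb, rfl⟩

theorem stmt7_general (hn : IsUnit (n.factorial : R)) (φ : A →ₐ[R] A)
    (hx : φ x = x) (hy : φ y = x + y) :
    Submodule.map (φ.toLinearMap - LinearMap.id)
        (Submodule.span R {m : A | ∃ a b : ℕ, b ≤ n ∧ m = x ^ a * y ^ b}) =
      Submodule.span R {m : A | ∃ a b : ℕ, 1 ≤ a ∧ b < n ∧ m = x ^ a * y ^ b} := by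
  have map_monomial (a b : ℕ) :
      (φ.toLinearMap - LinearMap.id : A →ₗ[R] A) (x ^ a * y ^ b) =
        x ^ a * (x + y) ^ b - x ^ a * y ^ b := by
    simp [hx, hy]
  apply le_antisymm
  · rw [Submodule.map_span_le]
    rintro _ ⟨a, b, hb, rfl⟩
    rw [map_monomial]
    exact pow_mul_add_pow_sub_mem_span a hb
  · rw [Submodule.span_le]
    rintro _ ⟨a, b, ha, hb, rfl⟩
    obtain ⟨a, rfl⟩ := Nat.exists_eq_add_of_le' ha
    refine pow_succ_mul_pow_mem_of_pow_mul_add_pow_sub_mem hn (fun a b hb ↦ ?_) a hb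
    rw [← map_monomial]
    exact Submodule.mem_map_of_mem (Submodule.subset_span ⟨a, b, hb, rfl⟩)

end Shift

/-- Let `p` be an odd prime and `K` a field of characteristic `p`.  Let `φ` be the
`K`-algebra endomorphism of `K[X,Y]` with `φ(X) = X`, `φ(Y) = X + Y`, and let `W` be the
`K`-span of `{X^a Y^b : a ≥ 0, 0 ≤ b ≤ p − 1}`.  Then `(φ − id)(W)` is the `K`-span of
`{X^a Y^b : a ≥ 1, 0 ≤ b ≤ p − 2}`. -/
theorem stmt7 (p : ℕ) (hp : p.Prime) (hodd : Odd p) (K : Type*) [Field K] [CharP K p]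
    (φ : MvPolynomial (Fin 2) K →ₐ[K] MvPolynomial (Fin 2) K)
    (hX : φ (X 0) = X 0) (hY : φ (X 1) = X 0 + X 1) :
    Submodule.map (φ.toLinearMap - LinearMap.id)
        (Submodule.span K {m : MvPolynomial (Fin 2) K |
          ∃ a b : ℕ, b ≤ p - 1 ∧ m = X 0 ^ a * X 1 ^ b}) =
      Submodule.span K {m : MvPolynomial (Fin 2) K |
        ∃ a b : ℕ, 1 ≤ a ∧ b ≤ p - 2 ∧ m = X 0 ^ a * X 1 ^ b} := by
  have hb (b : ℕ) : b ≤ p - 2 ↔ b < p - 1 := by have := hp.two_le; omega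
  have : Fact p.Prime := ⟨hp⟩
  simpa only [hb] using stmt7_general
    ((IsUnit.natCast_factorial_iff_of_charP p).2 (Nat.sub_one_lt hp.ne_zero)) φ hX hY
end

section
/- Let p be an odd prime and let K be a field of characteristic p. Let φ be the K-algebra endomorphism of K[X,Y] determined by φ(X) = X and φ(Y) = X + Y, and let W ⊆ K[X,Y] be the K-linear span of the monomials {X^a Y^b : a ≥ 0, 0 ≤ b ≤ p − 1}. Then (φ − id)(W) ⊆ W, and the images of the polynomials Y^k (for 0 ≤ k ≤ p − 1) together with X^a Y^{p−1} (for a ≥ 1) under the quotient map W → W / (φ − id)(W) form a K-basis of the quotient space W / (φ − id)(W). -/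
noncomputable section

open MvPolynomial

variable (p : ℕ) (K : Type) [Field K]

/-- The `K`-span `W` of the monomials `{X^a Y^b : a ≥ 0, 0 ≤ b ≤ p − 1}` in `K[X,Y]`. -/
def Wspan : Submodule K (MvPolynomial (Fin 2) K) :=
  Submodule.span K {m | ∃ a b : ℕ, b ≤ p - 1 ∧ m = X 0 ^ a * X 1 ^ b}

/-- The polynomials `Y^k` (for `0 ≤ k ≤ p−1`) and `X^a Y^{p−1}` (for `a ≥ 1`). -/
def famFn : Fin p ⊕ ℕ → MvPolynomial (Fin 2) K
  | .inl k => X 1 ^ (k : ℕ)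
  | .inr a => X 0 ^ (a + 1) * X 1 ^ (p - 1)

theorem famFn_mem (i : Fin p ⊕ ℕ) : famFn p K i ∈ Wspan p K := by
  cases i with
  | inl k =>
      exact Submodule.subset_span ⟨0, k, by have := k.2; omega, by simp [famFn]⟩
  | inr a => exact Submodule.subset_span ⟨a + 1, p - 1, le_rfl, by simp [famFn]⟩

/-!
On monomials, `(φ - id)(X^a Y^b) = ∑_{i < b} (b choose i) X^(a + b - i) Y^i`: every term is
divisible by `X` and has `Y`-degree less than `b`. Its leading term in `Y` is
`b X^(a + 1) Y^(b - 1)`, and `b` is invertible for `0 < b < p`, so by induction on the `Y`-degree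
the image of `W` is exactly the span of the monomials `X^a Y^b` with `0 < a` and `b < p - 1`. The
monomials of `W` outside this set represent a basis of the quotient.
-/

section QuotientBasis

open Submodule

variable {R M κ : Type*} [Ring R] [AddCommGroup M] [Module R M]

theorem exists_basis_sup_quotient_of_disjoint {P N : Submodule R M} (hPN : Disjoint P N)
    (b : Module.Basis κ R P) :
    ∃ B : Module.Basis κ R (↥(P ⊔ N) ⧸ N.comap (P ⊔ N).subtype),
      ∀ k, B k = Submodule.Quotient.mk ⟨b k, mem_sup_left (b k).2⟩ := by
  have hbot : P.comap P.subtype ⊓ N.comap P.subtype = ⊥ := by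
    rw [← comap_inf, hPN.eq_bot, comap_bot, ker_subtype]
  exact ⟨b.map ((quotEquivOfEqBot _ hbot).symm ≪≫ₗ LinearMap.quotientInfEquivSupQuotient P N),
    fun _ => rfl⟩

theorem exists_basis_quotient_of_linearIndependent {w : κ → M} (hw : LinearIndependent R w)
    {W N : Submodule R M} (hdisj : Disjoint (span R (Set.range w)) N)
    (hsup : span R (Set.range w) ⊔ N = W) :
    ∃ B : Module.Basis κ R (↥W ⧸ N.comap W.subtype),
      ∀ k (h : w k ∈ W), B k = Submodule.Quotient.mk ⟨w k, h⟩ := by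
  subst hsup
  obtain ⟨B, hB⟩ := exists_basis_sup_quotient_of_disjoint hdisj (Module.Basis.span hw)
  refine ⟨B, fun k h => ?_⟩
  simp only [hB, Module.Basis.span_apply]

end QuotientBasis

section Monomials

variable (R : Type*) [CommSemiring R]

/-- The monomial `X^a Y^b` of `R[X,Y]`, indexed by the pair `(a, b)` so that sets of monomials
can be described by sets of exponents. -/
def xyMonomial (m : ℕ × ℕ) : MvPolynomial (Fin 2) R := X 0 ^ m.1 * X 1 ^ m.2

theorem linearIndependent_xyMonomial : LinearIndependent R (xyMonomial R) := by
  let exponent (m : ℕ × ℕ) : Fin 2 →₀ ℕ := Finsupp.single 0 m.1 + Finsupp.single 1 m.2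
  have hinj : Function.Injective exponent := fun m m' h =>
    Prod.ext (by simpa [exponent] using DFunLike.congr_fun h 0)
      (by simpa [exponent] using DFunLike.congr_fun h 1)
  have hmonomial : xyMonomial R = basisMonomials (Fin 2) R ∘ exponent := by
    funext m
    simp [xyMonomial, exponent, X_pow_eq_monomial, monomial_mul]
  exact hmonomial ▸ (basisMonomials (Fin 2) R).linearIndependent.comp exponent hinj

/-- The space `W` over a commutative semiring: the polynomials of degree at most `n` in `Y`. The
bound `n` plays the role of `p - 1`, which avoids truncated subtraction. -/
def yDegreeLE (n : ℕ) : Submodule R (MvPolynomial (Fin 2) R) :=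
  Submodule.span R {m | ∃ a b : ℕ, b ≤ n ∧ m = X 0 ^ a * X 1 ^ b}

theorem yDegreeLE_eq_span_image (n : ℕ) :
    yDegreeLE R n = Submodule.span R (xyMonomial R '' {m | m.2 ≤ n}) := by
  rw [yDegreeLE]
  congr 1
  ext f
  simp [xyMonomial, eq_comm]

/-- The monomials `Y^k` for `k ≤ n` and `X^(a + 1) Y^n`, which represent a basis of the coinvariants
of `yDegreeLE R n`. -/
def coinvariantRep (n : ℕ) : Fin (n + 1) ⊕ ℕ → MvPolynomial (Fin 2) R
  | .inl k => X 1 ^ (k : ℕ)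
  | .inr a => X 0 ^ (a + 1) * X 1 ^ n

/-- The exponents of the monomials `coinvariantRep R n`. -/
def coinvariantExponent (n : ℕ) : Fin (n + 1) ⊕ ℕ → ℕ × ℕ
  | .inl k => (0, k)
  | .inr a => (a + 1, n)

theorem coinvariantRep_eq_comp (n : ℕ) :
    coinvariantRep R n = xyMonomial R ∘ coinvariantExponent n := by
  funext i
  cases i <;> simp [coinvariantRep, xyMonomial, coinvariantExponent]

theorem coinvariantExponent_injective (n : ℕ) : Function.Injective (coinvariantExponent n) := by
  rintro (k | a) (k' | a') h <;> simp_all [coinvariantExponent, Fin.ext_iff]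

theorem range_coinvariantExponent (n : ℕ) :
    Set.range (coinvariantExponent n) = {m | m.2 ≤ n} \ {m | 0 < m.1 ∧ m.2 < n} := by
  ext m
  constructor
  · rintro ⟨k | a, rfl⟩
    · exact ⟨Nat.le_of_lt_succ k.2, fun h => lt_irrefl 0 h.1⟩
    · exact ⟨le_refl n, fun h => lt_irrefl n h.2⟩
  · obtain ⟨_ | a, b⟩ := m <;> rintro ⟨hb : b ≤ n, hab⟩
    · exact ⟨.inl ⟨b, Nat.lt_succ_of_le hb⟩, rfl⟩
    · have hbn : b = n := hb.antisymm (not_lt.1 fun h => hab ⟨a.succ_pos, h⟩)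
      exact ⟨.inr a, by rw [coinvariantExponent, hbn]⟩

theorem linearIndependent_coinvariantRep (n : ℕ) : LinearIndependent R (coinvariantRep R n) :=
  coinvariantRep_eq_comp R n ▸
    (linearIndependent_xyMonomial R).comp _ (coinvariantExponent_injective n)

theorem span_range_coinvariantRep (n : ℕ) :
    Submodule.span R (Set.range (coinvariantRep R n)) =
      Submodule.span R (xyMonomial R '' ({m | m.2 ≤ n} \ {m | 0 < m.1 ∧ m.2 < n})) := by
  rw [coinvariantRep_eq_comp, Set.range_comp, range_coinvariantExponent]

theorem disjoint_span_range_coinvariantRep (n : ℕ) :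
    Disjoint (Submodule.span R (Set.range (coinvariantRep R n)))
      (Submodule.span R (xyMonomial R '' {m | 0 < m.1 ∧ m.2 < n})) :=
  span_range_coinvariantRep R n ▸
    (linearIndependent_xyMonomial R).disjoint_span_image Set.disjoint_sdiff_left

theorem span_range_coinvariantRep_sup (n : ℕ) :
    Submodule.span R (Set.range (coinvariantRep R n)) ⊔
      Submodule.span R (xyMonomial R '' {m | 0 < m.1 ∧ m.2 < n}) = yDegreeLE R n := by
  have hsub : {m : ℕ × ℕ | 0 < m.1 ∧ m.2 < n} ⊆ {m | m.2 ≤ n} := fun _ hm => hm.2.le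
  rw [span_range_coinvariantRep, ← Submodule.span_union, ← Set.image_union,
    Set.sdiff_union_of_subset hsub, yDegreeLE_eq_span_image]

theorem coinvariantRep_mem_yDegreeLE (n : ℕ) (i : Fin (n + 1) ⊕ ℕ) :
    coinvariantRep R n i ∈ yDegreeLE R n :=
  span_range_coinvariantRep_sup R n ▸
    Submodule.mem_sup_left (Submodule.subset_span (Set.mem_range_self i))

end Monomials

section Shear

variable {R : Type*} [CommRing R] {φ : MvPolynomial (Fin 2) R →ₐ[R] MvPolynomial (Fin 2) R}
  (hX : φ (X 0) = X 0) (hY : φ (X 1) = X 0 + X 1)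

include hX hY

theorem sub_id_xyMonomial (a b : ℕ) :
    (φ.toLinearMap - LinearMap.id : MvPolynomial (Fin 2) R →ₗ[R] MvPolynomial (Fin 2) R)
        (xyMonomial R (a, b)) =
      ∑ i ∈ Finset.range b, (b.choose i : R) • xyMonomial R (a + (b - i), i) := by
  have hbinom : (X 0 + X 1 : MvPolynomial (Fin 2) R) ^ b =
      ∑ i ∈ Finset.range b, X 1 ^ i * X 0 ^ (b - i) * (b.choose i : MvPolynomial (Fin 2) R) +
        X 1 ^ b := by
    rw [add_comm (X 0), add_pow, Finset.sum_range_succ]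
    simp
  simp only [xyMonomial, LinearMap.sub_apply, AlgHom.toLinearMap_apply, LinearMap.id_apply,
    map_mul, map_pow, hX, hY, hbinom, mul_add, add_sub_cancel_right, Finset.mul_sum]
  refine Finset.sum_congr rfl fun i _ => ?_
  rw [smul_eq_C_mul, map_natCast]
  ring

theorem map_sub_id_yDegreeLE_le (n : ℕ) :
    (yDegreeLE R n).map (φ.toLinearMap - LinearMap.id) ≤
      Submodule.span R (xyMonomial R '' {m | 0 < m.1 ∧ m.2 < n}) := by
  rw [yDegreeLE_eq_span_image, Submodule.map_span, Submodule.span_le]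
  rintro _ ⟨_, ⟨⟨a, b⟩, hb : b ≤ n, rfl⟩, rfl⟩
  rw [sub_id_xyMonomial hX hY]
  refine Submodule.sum_mem _ fun i hi => Submodule.smul_mem _ _ (Submodule.subset_span ?_)
  have hib : i < b := Finset.mem_range.1 hi
  exact Set.mem_image_of_mem _
    ⟨Nat.add_pos_right a (Nat.sub_pos_of_lt hib), hib.trans_le hb⟩

theorem xyMonomial_mem_map_sub_id_yDegreeLE {n : ℕ}
    (hn : ∀ k : ℕ, 0 < k → k ≤ n → IsUnit (k : R)) {b : ℕ} (hb : b < n) (a : ℕ) :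
    xyMonomial R (a + 1, b) ∈ (yDegreeLE R n).map (φ.toLinearMap - LinearMap.id) := by
  induction b using Nat.strong_induction_on generalizing a with
  | _ b ih =>
    have hmem : xyMonomial R (a, b + 1) ∈ yDegreeLE R n :=
      Submodule.subset_span ⟨a, b + 1, hb, rfl⟩
    have himage := Submodule.mem_map_of_mem (f := φ.toLinearMap - LinearMap.id) hmem
    have hlower : ∑ i ∈ Finset.range b, ((b + 1).choose i : R) • xyMonomial R (a + (b + 1 - i), i) ∈
        (yDegreeLE R n).map (φ.toLinearMap - LinearMap.id) := by
      refine Submodule.sum_mem _ fun i hi => Submodule.smul_mem _ _ ?_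
      have hib : i < b := Finset.mem_range.1 hi
      rw [show a + (b + 1 - i) = a + (b - i) + 1 by omega]
      exact ih i hib (hib.trans hb) _
    rw [sub_id_xyMonomial hX hY, Finset.sum_range_succ, Submodule.add_mem_iff_right _ hlower,
      Nat.choose_succ_self_right, Nat.add_sub_cancel_left] at himage
    exact (Submodule.smul_mem_iff_of_isUnit _ (hn (b + 1) b.succ_pos hb)).1 himage

theorem map_sub_id_yDegreeLE {n : ℕ} (hn : ∀ k : ℕ, 0 < k → k ≤ n → IsUnit (k : R)) :
    (yDegreeLE R n).map (φ.toLinearMap - LinearMap.id) =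
      Submodule.span R (xyMonomial R '' {m | 0 < m.1 ∧ m.2 < n}) := by
  refine (map_sub_id_yDegreeLE_le hX hY n).antisymm (Submodule.span_le.2 ?_)
  rintro _ ⟨⟨_ | a, b⟩, ⟨ha, hb⟩, rfl⟩
  · exact absurd ha (lt_irrefl 0)
  · exact xyMonomial_mem_map_sub_id_yDegreeLE hX hY hn hb a

end Shear

theorem stmt8_general {R : Type*} [CommRing R] {n : ℕ}
    (hn : ∀ k : ℕ, 0 < k → k ≤ n → IsUnit (k : R))
    {φ : MvPolynomial (Fin 2) R →ₐ[R] MvPolynomial (Fin 2) R}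
    (hX : φ (X 0) = X 0) (hY : φ (X 1) = X 0 + X 1) :
    (yDegreeLE R n).map (φ.toLinearMap - LinearMap.id) ≤ yDegreeLE R n ∧
    ∃ B : Module.Basis (Fin (n + 1) ⊕ ℕ) R
        (↥(yDegreeLE R n) ⧸ ((yDegreeLE R n).map (φ.toLinearMap - LinearMap.id)).comap
          (yDegreeLE R n).subtype),
      ∀ i, B i =
        Submodule.Quotient.mk ⟨coinvariantRep R n i, coinvariantRep_mem_yDegreeLE R n i⟩ := by
  have hsup := span_range_coinvariantRep_sup R n
  rw [map_sub_id_yDegreeLE hX hY hn]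
  obtain ⟨B, hB⟩ := exists_basis_quotient_of_linearIndependent
    (linearIndependent_coinvariantRep R n) (disjoint_span_range_coinvariantRep R n) hsup
  exact ⟨le_sup_right.trans hsup.le, B, fun i => hB i _⟩

/-- for an odd prime `p` and `K` of characteristic `p`, with `φ` the
`K`-algebra endomorphism of `K[X,Y]` given by `φ(X) = X`, `φ(Y) = X + Y`, and `W` the span
of `{X^a Y^b : 0 ≤ b ≤ p − 1}`: one has `(φ − id)(W) ⊆ W`, and the images of `Y^k`
(`0 ≤ k ≤ p − 1`) and `X^a Y^{p−1}` (`a ≥ 1`) form a `K`-basis of `W / (φ − id)(W)`. -/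
theorem stmt8 (hp : p.Prime) (hodd : Odd p) (hchar : CharP K p)
    (φ : MvPolynomial (Fin 2) K →ₐ[K] MvPolynomial (Fin 2) K)
    (hX : φ (X 0) = X 0) (hY : φ (X 1) = X 0 + X 1) :
    Submodule.map (φ.toLinearMap - LinearMap.id) (Wspan p K) ≤ Wspan p K ∧
    ∃ B : Module.Basis (Fin p ⊕ ℕ) K
        (↥(Wspan p K) ⧸
          (Submodule.map (φ.toLinearMap - LinearMap.id) (Wspan p K)).comap
            (Wspan p K).subtype),
      ∀ i : Fin p ⊕ ℕ,
        B i = Submodule.Quotient.mk ⟨famFn p K i, famFn_mem p K i⟩ := by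
  obtain ⟨n, rfl⟩ := Nat.exists_eq_add_one.2 hp.pos
  obtain ⟨hle, B, hB⟩ := stmt8_general (fun _ hk hkn =>
    (CharP.isUnit_natCast_iff hp).2 (Nat.not_dvd_of_pos_of_lt hk (Nat.lt_succ_of_le hkn))) hX hY
  exact ⟨hle, B, fun | .inl k => hB (.inl k) | .inr a => hB (.inr a)⟩
end
end

section
/- Let p be an odd prime and let K be a field of characteristic p. Let A = Λ_K(x₁, y₁) ⊗_K K[x₂, y₂] be the tensor product of the exterior algebra on a 2-dimensional K-vector space with basis x₁, y₁ and the polynomial ring in two variables x₂, y₂, and let σ be the K-algebra automorphism of A determined by σ(x₁) = x₁, σ(y₁) = x₁ + y₁, σ(x₂) = x₂, σ(y₂) = x₂ + y₂. Then the subalgebra of σ-invariant elements {f ∈ A : σ(f) = f} is exactly the K-subalgebra generated by the five elements x₁, x₂, x₁y₁, x₁y₂ − y₁x₂, and ∏_{i=0}^{p−1} ((i : K)·x₂ + y₂). -/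
noncomputable section

open TensorProduct

/-- `A = Λ_K(x₁,y₁) ⊗_K K[x₂,y₂]`: the tensor product of the exterior algebra on a
2-dimensional `K`-vector space with the polynomial ring in two variables. -/
abbrev ExtPolyAlg (K : Type) [Field K] : Type :=
  ExteriorAlgebra K (Fin 2 → K) ⊗[K] MvPolynomial (Fin 2) K

variable (K : Type) [Field K]

/-- The element `x₁` of `A`. -/
def ex1 : ExtPolyAlg K := ExteriorAlgebra.ι K (Pi.single 0 1) ⊗ₜ 1

/-- The element `y₁` of `A`. -/
def ey1 : ExtPolyAlg K := ExteriorAlgebra.ι K (Pi.single 1 1) ⊗ₜ 1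

/-- The element `x₂` of `A`. -/
def ex2 : ExtPolyAlg K := 1 ⊗ₜ MvPolynomial.X 0

/-- The element `y₂` of `A`. -/
def ey2 : ExtPolyAlg K := 1 ⊗ₜ MvPolynomial.X 1

/-!
`Λ(x₁, y₁) ⊗ P` is free over `P = K[x₂, y₂]` on `1, x₁, y₁, x₁y₁`. If `a + x₁ b + y₁ c + x₁y₁ d` is
invariant, then so are `a`, `c`, `d`, while `σ b + c = b`. Since `x₂` divides `σ b - b`, it divides
`c`, and adding `c / x₂` times `x₁y₂ - y₁x₂` leaves `a + x₁ b' + x₁y₁ d` with `a`, `b'`, `d`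
invariant in `P`.

On `P = K[x₂][y₂]` the map `σ` is the translation `y₂ ↦ y₂ + x₂`, and `N = ∏ᵢ (y₂ + i x₂)` is monic
of degree `p` in `y₂` and invariant. Division by `N` therefore preserves invariance, and an
invariant remainder takes the same value at the `p` points `0, x₂, …, (p - 1) x₂` although its
degree is less than `p`, so it is constant in `y₂`; in characteristic `0` the multiples of
`x₂` are infinitely many, so every invariant is.
-/

section Translation

open Polynomial

variable {S : Type*} [CommRing S] {p : ℕ} {a : S} {f : S[X]}

/-- The product `∏_{i < p} (X + i a)`: in characteristic `p`, the norm of `X` under the translation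
`X ↦ X + a`. -/
def translationNorm (p : ℕ) (a : S) : S[X] := ∏ i ∈ Finset.range p, (X + C (i * a))

lemma monic_translationNorm (p : ℕ) (a : S) : (translationNorm p a).Monic :=
  monic_prod_of_monic _ _ fun _ _ ↦ monic_X_add_C _

lemma natDegree_translationNorm [Nontrivial S] (p : ℕ) (a : S) :
    (translationNorm p a).natDegree = p := by
  rw [translationNorm, natDegree_prod_of_monic _ _ fun _ _ ↦ monic_X_add_C _]
  simp only [natDegree_X_add_C, Finset.sum_const, Finset.card_range, smul_eq_mul, mul_one]

lemma taylor_translationNorm [CharP S p] (a : S) :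
    taylor a (translationNorm p a) = translationNorm p a := by
  have shift : taylor a (translationNorm p a) =
      ∏ i ∈ Finset.range p, (X + C (((i + 1 : ℕ) : S) * a)) := by
    simp only [translationNorm, taylor_apply, prod_comp, add_comp, X_comp, C_comp]
    refine Finset.prod_congr rfl fun i _ ↦ ?_
    rw [Nat.cast_succ, add_mul, one_mul, C_add]
    ring
  have wrap := (Finset.prod_range_succ' (fun i : ℕ ↦ X + C ((i : S) * a)) p).symm.trans
    (Finset.prod_range_succ _ p)
  rw [← shift] at wrap
  simp only [CharP.cast_eq_zero, Nat.cast_zero, zero_mul, C_0, add_zero] at wrap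
  exact isRegular_X.right wrap

lemma taylor_divByMonic_and_modByMonic {g : S[X]} (hg : g.Monic) (hga : taylor a g = g) :
    taylor a (f /ₘ g) = taylor a f /ₘ g ∧ taylor a (f %ₘ g) = taylor a f %ₘ g := by
  nontriviality S
  refine (div_modByMonic_unique _ _ hg ⟨?_, ?_⟩).imp Eq.symm Eq.symm
  · nth_rw 2 [← hga]
    rw [← taylor_mul, ← map_add, modByMonic_add_div]
  · rw [degree_taylor]
    exact degree_modByMonic_lt f hg

lemma C_dvd_taylor_sub_self (a : S) (f : S[X]) : C a ∣ taylor a f - f := by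
  have h := sub_dvd_eval_sub (X + C a) X (f.map C)
  rwa [add_sub_cancel_left, eval_map, eval_map, eval₂_C_X] at h

lemma eval_natCast_mul_of_taylor_eq_self (hf : taylor a f = f) (i : ℕ) :
    f.eval (i * a) = f.eval 0 := by
  induction i with
  | zero => rw [Nat.cast_zero, zero_mul]
  | succ i ih => rw [← ih, Nat.cast_succ, add_mul, one_mul, ← taylor_eval, hf]

variable [IsDomain S]

lemma eq_C_of_taylor_eq_self_of_injOn {n : ℕ} (ha : a ≠ 0)
    (hn : Set.InjOn (Nat.cast : ℕ → S) (Set.Iio n)) (hf : taylor a f = f) (hdeg : f.natDegree < n) :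
    f = C (f.eval 0) := by
  rw [← sub_eq_zero]
  refine eq_zero_of_natDegree_lt_card_of_eval_eq_zero _ (ι := Fin n)
    (f := fun i ↦ (i : ℕ) * a) (fun i j hij ↦ ?_) (fun i ↦ ?_) ?_
  · exact Fin.ext (hn i.2 j.2 (mul_right_cancel₀ ha hij))
  · rw [eval_sub, eval_C, eval_natCast_mul_of_taylor_eq_self hf, sub_self]
  · rwa [natDegree_sub_C, Fintype.card_fin]

lemma eq_C_of_taylor_eq_self [CharP S p] (ha : a ≠ 0) (hf : taylor a f = f)
    (hp : p = 0 ∨ f.natDegree < p) : f = C (f.eval 0) := by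
  rcases hp with rfl | hdeg
  · have := CharP.charP_to_charZero S
    exact eq_C_of_taylor_eq_self_of_injOn ha Nat.cast_injective.injOn hf (Nat.lt_succ_self _)
  · exact eq_C_of_taylor_eq_self_of_injOn ha (CharP.natCast_injOn_Iio S p) hf hdeg

lemma mem_adjoin_translationNorm [CharP S p] (ha : a ≠ 0) (hf : taylor a f = f) :
    f ∈ Algebra.adjoin S {translationNorm p a} := by
  induction hd : f.natDegree using Nat.strong_induction_on generalizing f with
  | _ d ih =>
  have hN := monic_translationNorm p a
  have hdegN := natDegree_translationNorm p a
  by_cases hp : p = 0 ∨ f.natDegree < p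
  · rw [eq_C_of_taylor_eq_self ha hf hp]
    exact Subalgebra.algebraMap_mem _ _
  · have hp0 : p ≠ 0 := fun h ↦ hp (.inl h)
    obtain ⟨hquot, hrem⟩ := taylor_divByMonic_and_modByMonic (f := f) hN (taylor_translationNorm a)
    rw [hf] at hquot hrem
    have hquot_mem := ih _ (by rw [natDegree_divByMonic f hN]; omega) hquot rfl
    have hrem_deg : (f %ₘ translationNorm p a).natDegree < p := by
      have := natDegree_modByMonic_lt f hN (fun h ↦ hp0 (by rw [← hdegN, h, natDegree_one]))
      rwa [hdegN] at this
    rw [← modByMonic_add_div f (translationNorm p a),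
      eq_C_of_taylor_eq_self ha hrem (.inr hrem_deg)]
    exact add_mem (Subalgebra.algebraMap_mem _ _)
      (mul_mem (Algebra.self_mem_adjoin_singleton _ _) hquot_mem)

theorem equalizer_taylorAlgHom_id [CharP S p] (ha : a ≠ 0) :
    AlgHom.equalizer (taylorAlgHom a) (AlgHom.id S S[X]) =
      Algebra.adjoin S {translationNorm p a} := by
  refine le_antisymm (fun f hf ↦ mem_adjoin_translationNorm ha hf) (Algebra.adjoin_le ?_)
  rintro _ rfl
  exact taylor_translationNorm a

end Translation

lemma adjoin_algebraMap_image_union_of_adjoin_eq_top {R S A : Type*} [CommSemiring R]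
    [CommSemiring S] [CommSemiring A] [Algebra R S] [Algebra R A] [Algebra S A]
    [IsScalarTower R S A] {s : Set S} (hs : Algebra.adjoin R s = ⊤) (t : Set A) :
    Algebra.adjoin R (algebraMap S A '' s ∪ t) = (Algebra.adjoin S t).restrictScalars R := by
  rw [Algebra.adjoin_restrictScalars R S A, Algebra.restrictScalars_adjoin, ← hs,
    AlgHom.map_adjoin, Algebra.adjoin_union, Algebra.adjoin_union, Algebra.adjoin_eq]
  rfl

section Shear

open MvPolynomial

variable (R : Type*) [CommRing R]

/-- The algebra endomorphism `X₀ ↦ X₀`, `X₁ ↦ X₀ + X₁` of the polynomial ring in two variables. -/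
def shear : MvPolynomial (Fin 2) R →ₐ[R] MvPolynomial (Fin 2) R := aeval ![X 0, X 0 + X 1]

/-- The isomorphism `R[X₀, X₁] ≃ R[X₀][X₁]`, under which `shear` becomes the translation by `X₀`. -/
def shearEquiv : MvPolynomial (Fin 2) R ≃ₐ[R] Polynomial (MvPolynomial (Fin 1) R) :=
  (renameEquiv R (Equiv.swap 0 1)).trans (finSuccEquiv R 1)

@[simp]
lemma shear_X_zero : shear R (X 0) = X 0 := by simp [shear]

@[simp]
lemma shear_X_one : shear R (X 1) = X 0 + X 1 := by simp [shear]

@[simp]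
lemma shearEquiv_X_zero : shearEquiv R (X 0) = Polynomial.C (X 0) := by
  simpa [shearEquiv] using finSuccEquiv_X_succ (R := R) (j := (0 : Fin 1))

@[simp]
lemma shearEquiv_X_one : shearEquiv R (X 1) = Polynomial.X := by
  simpa [shearEquiv] using finSuccEquiv_X_zero (R := R) (n := 1)

lemma shearEquiv_shear (f : MvPolynomial (Fin 2) R) :
    shearEquiv R (shear R f) = Polynomial.taylor (X 0) (shearEquiv R f) := by
  have h : (shearEquiv R).toAlgHom.comp (shear R) =
      ((Polynomial.taylorAlgHom (X 0)).restrictScalars R).comp (shearEquiv R).toAlgHom := by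
    refine algHom_ext fun i ↦ ?_
    fin_cases i <;> simp [add_comm]
  exact DFunLike.congr_fun h f

lemma shearEquiv_prod (p : ℕ) :
    shearEquiv R (∏ i ∈ Finset.range p, ((i : R) • X 0 + X 1)) = translationNorm p (X 0) := by
  simp [translationNorm, map_prod, Algebra.smul_def, add_comm]

lemma X_zero_dvd_shear_sub_self (f : MvPolynomial (Fin 2) R) : X 0 ∣ shear R f - f := by
  rw [← map_dvd_iff (shearEquiv R), map_sub, shearEquiv_shear, shearEquiv_X_zero]
  exact C_dvd_taylor_sub_self _ _

theorem equalizer_shear_id [IsDomain R] (p : ℕ) [CharP R p] :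
    AlgHom.equalizer (shear R) (AlgHom.id R _) =
      Algebra.adjoin R {X 0, ∏ i ∈ Finset.range p, ((i : R) • X 0 + X 1)} := by
  have hgen : Algebra.adjoin R {(X 0 : MvPolynomial (Fin 1) R)} = ⊤ := by
    rw [← adjoin_range_X, Set.range_unique]
    rfl
  have hfixed := congrArg (Subalgebra.restrictScalars R)
    (equalizer_taylorAlgHom_id (p := p) (X_ne_zero (R := R) (0 : Fin 1)))
  rw [← adjoin_algebraMap_image_union_of_adjoin_eq_top hgen, Set.image_singleton] at hfixed
  have hmap : (Algebra.adjoin R {X 0, ∏ i ∈ Finset.range p, ((i : R) • X 0 + X 1)}).map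
      (shearEquiv R).toAlgHom =
      Algebra.adjoin R
        ({algebraMap (MvPolynomial (Fin 1) R) _ (X 0)} ∪ {translationNorm p (X 0)}) := by
    rw [AlgHom.map_adjoin, Set.image_pair, ← shearEquiv_prod]
    exact congrArg (fun z ↦ Algebra.adjoin R {z, _}) (shearEquiv_X_zero R)
  ext f
  calc f ∈ AlgHom.equalizer (shear R) (AlgHom.id R _)
      ↔ Polynomial.taylor (X 0) (shearEquiv R f) = shearEquiv R f := by
        rw [← shearEquiv_shear, (shearEquiv R).injective.eq_iff]
        rfl
    _ ↔ shearEquiv R f ∈ (Algebra.adjoin R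
          {X 0, ∏ i ∈ Finset.range p, ((i : R) • X 0 + X 1)}).map (shearEquiv R).toAlgHom := by
        rw [hmap]
        exact SetLike.ext_iff.mp hfixed _
    _ ↔ f ∈ Algebra.adjoin R {X 0, ∏ i ∈ Finset.range p, ((i : R) • X 0 + X 1)} :=
        (shearEquiv R).injective.mem_set_image

end Shear

lemma eq_of_sum_tmul_basis_left_eq {ι R M N : Type*} [Fintype ι] [CommSemiring R]
    [AddCommMonoid M] [Module R M] [AddCommMonoid N] [Module R N] (b : Module.Basis ι R M)
    {g g' : ι → N} (h : ∑ i, b i ⊗ₜ[R] g i = ∑ i, b i ⊗ₜ g' i) : g = g' := by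
  refine Finsupp.equivFunOnFinite.symm.injective (TensorProduct.sum_tmul_basis_left_injective b ?_)
  simpa [Finsupp.sum_fintype] using h

section Exterior

open ExteriorAlgebra

variable {R M P : Type*} [CommRing R] [AddCommGroup M] [Module R M] [CommRing P] [Algebra R P]

lemma basis_exteriorAlgebra_eq_ιMulti {I : Type*} [LinearOrder I] (e : Module.Basis I R M) {n : ℕ}
    {t : Finset I} (ht : t.card = n) {v : Fin n → I} (hv : ∀ k, v k ∈ t) (hmono : StrictMono v) :
    e.ExteriorAlgebra t = ιMulti R n (e ∘ v) := by
  rw [basis_apply_ofCard e ht, Finset.orderEmbOfFin_unique ht hv hmono]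
  rfl

/-- The element `a + x b + y c + x y d` of `Λ(M) ⊗ P`, where `x, y` is the basis `e` of `M`. -/
def exteriorExpansion (e : Module.Basis (Fin 2) R M) (a b c d : P) : ExteriorAlgebra R M ⊗[R] P :=
  1 ⊗ₜ a + ι R (e 0) ⊗ₜ b + ι R (e 1) ⊗ₜ c + (ι R (e 0) * ι R (e 1)) ⊗ₜ d

lemma exteriorExpansion_eq_sum (e : Module.Basis (Fin 2) R M) (g : Finset (Fin 2) → P) :
    exteriorExpansion e (g ∅) (g {0}) (g {1}) (g {0, 1}) = ∑ t, e.ExteriorAlgebra t ⊗ₜ g t := by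
  have huniv : (Finset.univ : Finset (Finset (Fin 2))) = {∅, {0}, {1}, {0, 1}} := by decide
  have h0 := basis_exteriorAlgebra_eq_ιMulti e (n := 0) (t := ∅) rfl (v := ![]) (by simp)
    (Subsingleton.strictMono _)
  have hx := basis_exteriorAlgebra_eq_ιMulti e (n := 1) (t := {0}) rfl (v := ![0]) (by simp)
    (Subsingleton.strictMono _)
  have hy := basis_exteriorAlgebra_eq_ιMulti e (n := 1) (t := {1}) rfl (v := ![1]) (by simp)
    (Subsingleton.strictMono _)
  have hxy := basis_exteriorAlgebra_eq_ιMulti e (n := 2) (t := {0, 1}) rfl (v := ![0, 1])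
    (by decide) (by simp)
  rw [huniv, Finset.sum_insert (by decide), Finset.sum_insert (by decide),
    Finset.sum_insert (by decide), Finset.sum_singleton, h0, hx, hy, hxy]
  simp [exteriorExpansion, ιMulti_apply, Matrix.vecTail, add_assoc]

lemma exists_eq_exteriorExpansion (e : Module.Basis (Fin 2) R M) (f : ExteriorAlgebra R M ⊗[R] P) :
    ∃ a b c d : P, f = exteriorExpansion e a b c d := by
  obtain ⟨g, rfl⟩ := TensorProduct.eq_repr_basis_left e.ExteriorAlgebra f
  exact ⟨_, _, _, _, (Finsupp.sum_fintype _ _ (by simp)).trans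
    (exteriorExpansion_eq_sum e g).symm⟩

lemma exteriorExpansion_inj (e : Module.Basis (Fin 2) R M) {a b c d a' b' c' d' : P} :
    exteriorExpansion e a b c d = exteriorExpansion e a' b' c' d' ↔
      a = a' ∧ b = b' ∧ c = c' ∧ d = d' := by
  refine ⟨fun h ↦ ?_, by rintro ⟨rfl, rfl, rfl, rfl⟩; rfl⟩
  let coeff (a b c d : P) (t : Finset (Fin 2)) : P :=
    if 0 ∈ t then if 1 ∈ t then d else b else if 1 ∈ t then c else a
  have hsum (a b c d : P) :
      exteriorExpansion e a b c d = ∑ t, e.ExteriorAlgebra t ⊗ₜ[R] coeff a b c d t := by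
    simpa [coeff] using exteriorExpansion_eq_sum e (coeff a b c d)
  rw [hsum, hsum] at h
  have hcoeff := congrFun (eq_of_sum_tmul_basis_left_eq e.ExteriorAlgebra h)
  exact ⟨by simpa [coeff] using hcoeff ∅, by simpa [coeff] using hcoeff {0},
    by simpa [coeff] using hcoeff {1}, by simpa [coeff] using hcoeff {0, 1}⟩

lemma map_exteriorExpansion (e : Module.Basis (Fin 2) R M) {s : P →ₐ[R] P}
    {σ : ExteriorAlgebra R M ⊗[R] P →ₐ[R] ExteriorAlgebra R M ⊗[R] P}
    (hx : σ (ι R (e 0) ⊗ₜ 1) = ι R (e 0) ⊗ₜ 1)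
    (hy : σ (ι R (e 1) ⊗ₜ 1) = ι R (e 0) ⊗ₜ 1 + ι R (e 1) ⊗ₜ 1)
    (hs : ∀ f, σ (1 ⊗ₜ f) = 1 ⊗ₜ s f) (a b c d : P) :
    σ (exteriorExpansion e a b c d) = exteriorExpansion e (s a) (s b + s c) (s c) (s d) := by
  have hmul (z : ExteriorAlgebra R M) (f : P) : σ (z ⊗ₜ f) = σ (z ⊗ₜ 1) * 1 ⊗ₜ s f := by
    rw [← hs, ← map_mul, Algebra.TensorProduct.tmul_mul_tmul, mul_one, one_mul]
  have hxy : σ ((ι R (e 0) * ι R (e 1)) ⊗ₜ 1) = (ι R (e 0) * ι R (e 1)) ⊗ₜ 1 := by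
    rw [← mul_one (1 : P), ← Algebra.TensorProduct.tmul_mul_tmul, map_mul, hx, hy, mul_add]
    simp
  rw [exteriorExpansion, map_add, map_add, map_add, hs, hmul, hmul (ι R (e 1)), hmul (_ * _),
    hx, hy, hxy]
  simp only [exteriorExpansion, Algebra.TensorProduct.tmul_mul_tmul, mul_one, one_mul, add_mul,
    tmul_add]
  abel

lemma exists_eq_mul_of_unipotent_pair {s : P →+* P} {x y : P} (hx : IsLeftRegular x) (hsx : s x = x)
    (hsy : s y = x + y) (hdvd : ∀ f, x ∣ s f - f) {b c : P} (hb : s b + s c = b) (hc : s c = c) :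
    ∃ c', c = x * c' ∧ s c' = c' ∧ s (b + y * c') = b + y * c' := by
  obtain ⟨t, ht⟩ := hdvd b
  have hct : c = x * -t := by linear_combination hb - hc - ht
  have hst : s (-t) = -t := hx (by simpa [hct, hsx] using hc)
  refine ⟨-t, hct, hst, ?_⟩
  rw [map_add, map_mul, hst, hsy]
  linear_combination ht

lemma exteriorExpansion_mul_eq (e : Module.Basis (Fin 2) R M) (x y a b c d : P) :
    exteriorExpansion e a b (x * c) d =
      1 ⊗ₜ a + ι R (e 0) ⊗ₜ 1 * 1 ⊗ₜ (b + y * c) - (ι R (e 0) ⊗ₜ y - ι R (e 1) ⊗ₜ x) * 1 ⊗ₜ c +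
        (ι R (e 0) * ι R (e 1)) ⊗ₜ 1 * 1 ⊗ₜ d := by
  simp only [exteriorExpansion, sub_mul, Algebra.TensorProduct.tmul_mul_tmul, mul_one, one_mul,
    mul_add, tmul_add]
  abel

lemma exteriorExpansion_mul_mem (e : Module.Basis (Fin 2) R M) {x y a b c d : P}
    {T : Subalgebra R (ExteriorAlgebra R M ⊗[R] P)} (hx : ι R (e 0) ⊗ₜ 1 ∈ T)
    (hxy : (ι R (e 0) * ι R (e 1)) ⊗ₜ 1 ∈ T) (hq : ι R (e 0) ⊗ₜ y - ι R (e 1) ⊗ₜ x ∈ T)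
    (ha : 1 ⊗ₜ a ∈ T) (hb : 1 ⊗ₜ (b + y * c) ∈ T) (hc : 1 ⊗ₜ c ∈ T) (hd : 1 ⊗ₜ d ∈ T) :
    exteriorExpansion e a b (x * c) d ∈ T := by
  rw [exteriorExpansion_mul_eq e x y]
  exact add_mem (sub_mem (add_mem ha (mul_mem hx hb)) (mul_mem hq hc)) (mul_mem hxy hd)

theorem equalizer_exteriorAlgebra_tensor (e : Module.Basis (Fin 2) R M) {s : P →ₐ[R] P}
    {σ : ExteriorAlgebra R M ⊗[R] P →ₐ[R] ExteriorAlgebra R M ⊗[R] P}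
    (hσx : σ (ι R (e 0) ⊗ₜ 1) = ι R (e 0) ⊗ₜ 1)
    (hσy : σ (ι R (e 1) ⊗ₜ 1) = ι R (e 0) ⊗ₜ 1 + ι R (e 1) ⊗ₜ 1)
    (hσs : ∀ f, σ (1 ⊗ₜ f) = 1 ⊗ₜ s f) {x y : P} (hx : IsLeftRegular x) (hsx : s x = x)
    (hsy : s y = x + y) (hdvd : ∀ f, x ∣ s f - f) :
    AlgHom.equalizer σ (AlgHom.id R _) =
      (AlgHom.equalizer s (AlgHom.id R P)).map Algebra.TensorProduct.includeRight ⊔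
        Algebra.adjoin R {ι R (e 0) ⊗ₜ 1, (ι R (e 0) * ι R (e 1)) ⊗ₜ 1,
          ι R (e 0) ⊗ₜ y - ι R (e 1) ⊗ₜ x} := by
  have hσ := map_exteriorExpansion e hσx hσy hσs
  refine le_antisymm (fun f hf ↦ ?_) (sup_le ?_ (Algebra.adjoin_le ?_))
  · obtain ⟨a, b, c, d, rfl⟩ := exists_eq_exteriorExpansion e f
    obtain ⟨ha, hb, hc, hd⟩ := (exteriorExpansion_inj e).mp ((hσ a b c d).symm.trans hf)
    obtain ⟨c, rfl, hc', hbc⟩ :=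
      exists_eq_mul_of_unipotent_pair (s := (s : P →+* P)) hx hsx hsy hdvd hb hc
    exact exteriorExpansion_mul_mem e
      (Algebra.mem_sup_right (Algebra.subset_adjoin (by simp)))
      (Algebra.mem_sup_right (Algebra.subset_adjoin (by simp)))
      (Algebra.mem_sup_right (Algebra.subset_adjoin (by simp)))
      (Algebra.mem_sup_left ⟨_, ha, rfl⟩) (Algebra.mem_sup_left ⟨_, hbc, rfl⟩)
      (Algebra.mem_sup_left ⟨_, hc', rfl⟩) (Algebra.mem_sup_left ⟨_, hd, rfl⟩)
  · rintro _ ⟨g, hg, rfl⟩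
    exact (hσs g).trans (congrArg _ hg)
  · rintro _ (rfl | rfl | rfl)
    · exact hσx
    · simpa [exteriorExpansion] using hσ 0 0 0 1
    · simpa [exteriorExpansion, hsx, hsy, sub_eq_add_neg, tmul_add, tmul_neg] using hσ 0 y (-x) 0

end Exterior

open ExteriorAlgebra MvPolynomial in
theorem stmt9_general {R M : Type*} [CommRing R] [IsDomain R] [AddCommGroup M] [Module R M]
    (p : ℕ) [CharP R p] (e : Module.Basis (Fin 2) R M)
    (σ : ExteriorAlgebra R M ⊗[R] MvPolynomial (Fin 2) R →ₐ[R]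
      ExteriorAlgebra R M ⊗[R] MvPolynomial (Fin 2) R)
    (hx₁ : σ (ι R (e 0) ⊗ₜ 1) = ι R (e 0) ⊗ₜ 1)
    (hy₁ : σ (ι R (e 1) ⊗ₜ 1) = ι R (e 0) ⊗ₜ 1 + ι R (e 1) ⊗ₜ 1)
    (hx₂ : σ (1 ⊗ₜ X 0) = 1 ⊗ₜ X 0) (hy₂ : σ (1 ⊗ₜ X 1) = 1 ⊗ₜ X 0 + 1 ⊗ₜ X 1) :
    {f | σ f = f} = ↑(Algebra.adjoin R {ι R (e 0) ⊗ₜ[R] (1 : MvPolynomial (Fin 2) R), 1 ⊗ₜ X 0,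
      (ι R (e 0) * ι R (e 1)) ⊗ₜ 1, ι R (e 0) ⊗ₜ X 1 - ι R (e 1) ⊗ₜ X 0,
      1 ⊗ₜ ∏ i ∈ Finset.range p, ((i : R) • X 0 + X 1)}) := by
  have hshear : σ.comp Algebra.TensorProduct.includeRight =
      Algebra.TensorProduct.includeRight.comp (shear R) := by
    refine algHom_ext fun i ↦ ?_
    fin_cases i
    · simpa using hx₂
    · simpa [tmul_add] using hy₂
  have hfixed := equalizer_exteriorAlgebra_tensor e hx₁ hy₁
    (s := shear R) (DFunLike.congr_fun hshear)
    (IsRegular.of_ne_zero (X_ne_zero 0)).left (shear_X_zero R) (shear_X_one R)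
    (X_zero_dvd_shear_sub_self R)
  rw [equalizer_shear_id R p, AlgHom.map_adjoin, ← Algebra.adjoin_union, Set.image_pair] at hfixed
  refine (congrArg SetLike.coe hfixed).trans (congrArg (SetLike.coe ∘ Algebra.adjoin R) ?_)
  ext z
  simp only [Algebra.TensorProduct.includeRight_apply, Set.mem_union, Set.mem_insert_iff,
    Set.mem_singleton_iff]
  tauto

open MvPolynomial in
lemma prod_map_ex2_add_ey2 (p : ℕ) :
    ((List.range p).map (fun i ↦ (i : K) • ex2 K + ey2 K)).prod =
      1 ⊗ₜ ∏ i ∈ Finset.range p, ((i : K) • X 0 + X 1) := by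
  -- As `i : K` in the product, `List.range p` is coerced to `List K`, which elaborates to a
  -- monadic map.
  have hcast : (do let a ← List.range p; pure (a : K) : List K) =
      (List.range p).map (fun a : ℕ ↦ (a : K)) := List.flatMap_pure_eq_map _ _
  have hprod : ∏ i ∈ Finset.range p, ((i : K) • X 0 + X 1 : MvPolynomial (Fin 2) K) =
      ((List.range p).map fun i : ℕ ↦ (i : K) • X 0 + X 1).prod := rfl
  rw [hcast, hprod, ← Algebra.TensorProduct.includeRight_apply, map_list_prod, List.map_map,
    List.map_map]
  simp [ex2, ey2, Function.comp_def, tmul_add]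

/-- for an odd prime `p` and `K` of characteristic `p`, if `σ` is the
`K`-algebra endomorphism of `A` with `σ(x₁) = x₁`, `σ(y₁) = x₁ + y₁`, `σ(x₂) = x₂`,
`σ(y₂) = x₂ + y₂`, then the invariants `{f : σ f = f}` form exactly the `K`-subalgebra
generated by `x₁`, `x₂`, `x₁y₁`, `x₁y₂ − y₁x₂` and `∏_{i=0}^{p−1} ((i : K)·x₂ + y₂)`. -/
theorem stmt9 (p : ℕ) (hp : p.Prime) (hodd : Odd p) (hchar : CharP K p)
    (σ : ExtPolyAlg K →ₐ[K] ExtPolyAlg K)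
    (hx1 : σ (ex1 K) = ex1 K) (hy1 : σ (ey1 K) = ex1 K + ey1 K)
    (hx2 : σ (ex2 K) = ex2 K) (hy2 : σ (ey2 K) = ex2 K + ey2 K) :
    {f : ExtPolyAlg K | σ f = f} =
      ↑(Algebra.adjoin K {ex1 K, ex2 K, ex1 K * ey1 K, ex1 K * ey2 K - ey1 K * ex2 K,
          ((List.range p).map (fun i => (i : K) • ex2 K + ey2 K)).prod}) := by
  rw [prod_map_ex2_add_ey2]
  simpa [ex1, ey1, ex2, ey2] using stmt9_general p (Pi.basisFun K (Fin 2)) σ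
    (by simpa [ex1] using hx1) (by simpa [ex1, ey1] using hy1) hx2 hy2
end
end

section
/- Let p be an odd prime, n ≥ 2, q = p^n, and let K be a field of characteristic p. In the group algebra A = K[M] of M = ZMod q × ZMod q (written multiplicatively, with a = (1,0) and b = (0,1)), the following identities hold: ρ·(b − 1) = b·N(ab) − N(a); ρ·(a − 1) = N(b) − N(ab); ρ·(ab − 1) = N(b) − N(a); and κ·(a − 1) = −N(a). -/
noncomputable section

open MonoidAlgebra Finset

/-- The group `M = ZMod q × ZMod q`, written multiplicatively. -/
abbrev Mgrp (q : ℕ) : Type := Multiplicative (ZMod q × ZMod q)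

/-- The group algebra `K[M]`. -/
abbrev GrpAlg (K : Type) [Field K] (q : ℕ) : Type := MonoidAlgebra K (Mgrp q)

variable (K : Type) [Field K] (q : ℕ)

/-- The generator `a = (1,0)` of `M`, as an element of `K[M]`. -/
def aEl : GrpAlg K q := MonoidAlgebra.of K (Mgrp q) (Multiplicative.ofAdd (1, 0))

/-- The generator `b = (0,1)` of `M`, as an element of `K[M]`. -/
def bEl : GrpAlg K q := MonoidAlgebra.of K (Mgrp q) (Multiplicative.ofAdd (0, 1))

/-- `N(x) = ∑_{i=0}^{q−1} x^i`. -/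
def Nel (x : GrpAlg K q) : GrpAlg K q := ∑ i ∈ range q, x ^ i

/-- `ρ = ∑_{0 ≤ j ≤ i ≤ q−1} a^i b^j`. -/
def ρEl : GrpAlg K q :=
  ∑ ij ∈ (range q ×ˢ range q).filter (fun ij => ij.2 ≤ ij.1), aEl K q ^ ij.1 * bEl K q ^ ij.2

/-- `κ = ∑_{i=0}^{q−1} (i+1)·a^i`, with coefficients `(i+1)` taken in `K`. -/
def κEl : GrpAlg K q := ∑ i ∈ range q, ((i : K) + 1) • aEl K q ^ i

/-!
Summing the triangle `j ≤ i` by rows gives geometric sums in `b`, which `b - 1` collapses; summing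
it by columns gives geometric sums in `a`, which `a - 1` collapses. The identity for `a * b - 1` is
a combination of these two, because `a * b - 1 = (b - 1) + b * (a - 1)`. Multiplying `κ` by `a - 1`
telescopes, with boundary term `q • a ^ q = 0`.
-/

/-- The sum of `a ^ i * b ^ j` over the triangle `j ≤ i < m`, extending `ρEl` to two elements of an
arbitrary semiring. The index set is encoded as in `ρEl`, which is the case `m = q` of `K[M]`. -/
def triangularGeomSum {A : Type*} [Semiring A] (a b : A) (m : ℕ) : A :=
  ∑ ij ∈ (range m ×ˢ range m).filter (fun ij => ij.2 ≤ ij.1), a ^ ij.1 * b ^ ij.2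

section Semiring

variable {A : Type*} [Semiring A] (a b : A) (m : ℕ)

theorem triangularGeomSum_eq_sum_rows :
    triangularGeomSum a b m = ∑ i ∈ range m, a ^ i * ∑ j ∈ range (i + 1), b ^ j := by
  simp only [mul_sum]
  refine sum_finset_product _ _ _ fun ij => ?_
  simp only [mem_filter, mem_product, mem_range]
  lia

theorem triangularGeomSum_eq_sum_columns :
    triangularGeomSum a b m = ∑ j ∈ range m, (∑ i ∈ Ico j m, a ^ i) * b ^ j := by
  simp only [sum_mul]
  refine sum_finset_product_right _ _ _ fun ij => ?_
  simp only [mem_filter, mem_product, mem_range, mem_Ico]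
  lia

end Semiring

section CommRing

variable {A : Type*} [CommRing A] (a b : A) (m : ℕ)

theorem triangularGeomSum_mul_sub_one_right :
    triangularGeomSum a b m * (b - 1) =
      b * ∑ i ∈ range m, (a * b) ^ i - ∑ i ∈ range m, a ^ i := by
  rw [triangularGeomSum_eq_sum_rows, sum_mul, mul_sum, ← sum_sub_distrib]
  refine sum_congr rfl fun i _ => ?_
  rw [mul_assoc, geom_sum_mul]
  ring

theorem triangularGeomSum_mul_sub_one_left :
    triangularGeomSum a b m * (a - 1) =
      a ^ m * ∑ i ∈ range m, b ^ i - ∑ i ∈ range m, (a * b) ^ i := by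
  rw [triangularGeomSum_eq_sum_columns, sum_mul, mul_sum, ← sum_sub_distrib]
  refine sum_congr rfl fun j hj => ?_
  rw [mul_right_comm, geom_sum_Ico_mul a (mem_range.mp hj).le]
  ring

theorem triangularGeomSum_mul_mul_sub_one :
    triangularGeomSum a b m * (a * b - 1) =
      a ^ m * b * ∑ i ∈ range m, b ^ i - ∑ i ∈ range m, a ^ i := by
  linear_combination
    triangularGeomSum_mul_sub_one_right a b m + b * triangularGeomSum_mul_sub_one_left a b m

end CommRing

theorem sum_add_one_smul_pow_mul_sub_one {R A : Type*} [Semiring R] [Ring A] [Module R A]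
    [IsScalarTower R A A] (a : A) (m : ℕ) :
    (∑ i ∈ range m, ((i : R) + 1) • a ^ i) * (a - 1) =
      (m : R) • a ^ m - ∑ i ∈ range m, a ^ i := by
  have term_eq (i : ℕ) : ((i : R) + 1) • a ^ i * (a - 1) =
      (((i + 1 : ℕ) : R) • a ^ (i + 1) - (i : R) • a ^ i) - a ^ i := by
    rw [mul_sub_one, smul_mul_assoc, ← pow_succ, add_smul _ _ (a ^ i), one_smul, Nat.cast_succ,
      sub_sub]
  simp only [sum_mul, term_eq, sum_sub_distrib, sum_range_sub (fun i => (i : R) • a ^ i),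
    Nat.cast_zero, zero_smul, sub_zero]

theorem self_mul_geom_sum_of_pow_eq_one {A : Type*} [Ring A] {x : A} {m : ℕ} (hx : x ^ m = 1) :
    x * ∑ i ∈ range m, x ^ i = ∑ i ∈ range m, x ^ i := by
  rw [← sub_eq_zero, ← sub_one_mul, mul_geom_sum, hx, sub_self]

theorem of_ofAdd_pow_eq_one {R G : Type*} [Semiring R] [AddCommGroup G] {m : ℕ}
    [Module (ZMod m) G] (g : G) :
    MonoidAlgebra.of R (Multiplicative G) (Multiplicative.ofAdd g) ^ m = 1 := by
  rw [← map_pow, ← ofAdd_nsmul, ZModModule.char_nsmul_eq_zero, ofAdd_zero, map_one]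

theorem stmt11_general {R A : Type*} [Semiring R] [CommRing A] [Module R A] [IsScalarTower R A A]
    {a b : A} {m : ℕ} (ha : a ^ m = 1) (hb : b ^ m = 1) (hm : (m : R) = 0) :
    triangularGeomSum a b m * (b - 1) =
        b * ∑ i ∈ range m, (a * b) ^ i - ∑ i ∈ range m, a ^ i ∧
    triangularGeomSum a b m * (a - 1) =
        ∑ i ∈ range m, b ^ i - ∑ i ∈ range m, (a * b) ^ i ∧
    triangularGeomSum a b m * (a * b - 1) =
        ∑ i ∈ range m, b ^ i - ∑ i ∈ range m, a ^ i ∧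
    (∑ i ∈ range m, ((i : R) + 1) • a ^ i) * (a - 1) = -∑ i ∈ range m, a ^ i := by
  refine ⟨triangularGeomSum_mul_sub_one_right a b m, ?_, ?_, ?_⟩
  · rw [triangularGeomSum_mul_sub_one_left, ha, one_mul]
  · rw [triangularGeomSum_mul_mul_sub_one, ha, one_mul, self_mul_geom_sum_of_pow_eq_one hb]
  · rw [sum_add_one_smul_pow_mul_sub_one, hm, zero_smul, zero_sub]

/-- for an odd prime `p`, `n ≥ 2`, `q = p^n` and `K` of characteristic `p`,
the identities `ρ(b−1) = b·N(ab) − N(a)`, `ρ(a−1) = N(b) − N(ab)`, `ρ(ab−1) = N(b) − N(a)`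
and `κ(a−1) = −N(a)` hold in `K[M]`. -/
theorem stmt11 (p n : ℕ) (hp : p.Prime) (hodd : Odd p) (hn : 2 ≤ n)
    (hchar : CharP K p) (hq : q = p ^ n) :
    ρEl K q * (bEl K q - 1) = bEl K q * Nel K q (aEl K q * bEl K q) - Nel K q (aEl K q) ∧
    ρEl K q * (aEl K q - 1) = Nel K q (bEl K q) - Nel K q (aEl K q * bEl K q) ∧
    ρEl K q * (aEl K q * bEl K q - 1) = Nel K q (bEl K q) - Nel K q (aEl K q) ∧
    κEl K q * (aEl K q - 1) = -Nel K q (aEl K q) :=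
  stmt11_general (of_ofAdd_pow_eq_one _) (of_ofAdd_pow_eq_one _)
    ((CharP.cast_eq_zero_iff K p q).mpr (hq ▸ dvd_pow_self p (by lia)))
end
end

section
/- Let p be an odd prime, n ≥ 2, q = p^n, and let K be a field of characteristic p. Let σ be the K-algebra automorphism of the group algebra A = K[M] of M = ZMod q × ZMod q induced by the group automorphism of M sending a ↦ ab and b ↦ b (i.e. (i,j) ↦ (i, i + j)). Then ∑_{r=0}^{q−1} σ^r(ρ) · b^r = κ · N(b) in A. -/
noncomputable section

open MonoidAlgebra Finset

variable (K : Type) [Field K] (q : ℕ)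

/-!
Since `σ^r a = a * b ^ r` and `σ^r b = b`, the part `a ^ i * (1 + b + ⋯ + b ^ i)` of `ρ` contributes
`a ^ i * ∑ r < q, (b ^ (i + 1)) ^ r * (1 + b + ⋯ + b ^ i)` to the left-hand side. Writing each
exponent below `q * (i + 1)` in the form `(i + 1) * r + j` with `j ≤ i` turns the last sum into
`∑ k < q * (i + 1), b ^ k`, which runs `i + 1` times through the period `N(b)` because `b ^ q = 1`.
-/

theorem iterate_apply_of_map_eq_mul {M F : Type*} [Monoid M] [FunLike F M M] [MulHomClass F M M]
    {a b : M} {σ : F} (ha : σ a = a * b) (hb : σ b = b) (r : ℕ) : σ^[r] a = a * b ^ r := by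
  induction r with
  | zero => simp
  | succ r ih =>
    rw [Function.iterate_succ_apply, ha, iterate_map_mul, ih, Function.iterate_fixed hb, mul_assoc,
      ← pow_succ]

section Semiring

variable {A : Type*} [Semiring A] {a b : A} {m : ℕ}

theorem geom_sum_range_mul (x : A) (m n : ℕ) :
    ∑ k ∈ range (m * n), x ^ k = (∑ i ∈ range m, (x ^ n) ^ i) * ∑ j ∈ range n, x ^ j := by
  induction m with
  | zero => simp
  | succ m ih =>
    rw [Nat.succ_mul, sum_range_add, ih, sum_range_succ, add_mul, mul_sum (range n) _ ((x ^ n) ^ m)]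
    simp only [pow_add, ← pow_mul, mul_comm m n]

theorem geom_sum_pow_mul_geom_sum_of_pow_eq_one (hb : b ^ m = 1) (n : ℕ) :
    (∑ r ∈ range m, (b ^ n) ^ r) * ∑ j ∈ range n, b ^ j = n • ∑ k ∈ range m, b ^ k := by
  rw [← geom_sum_range_mul, mul_comm m n, geom_sum_range_mul, hb]
  simp only [one_pow, sum_const, card_range, smul_mul_assoc, one_mul]

theorem sum_pow_apply_pow_mul_geom_sum_mul_pow {σ : A →+* A} (hab : Commute a b) (hbm : b ^ m = 1)
    (ha : σ a = a * b) (hb : σ b = b) (i : ℕ) :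
    ∑ r ∈ range m, (σ ^ r) (a ^ i * ∑ j ∈ range (i + 1), b ^ j) * b ^ r =
      (i + 1) • a ^ i * ∑ k ∈ range m, b ^ k := by
  have summand_eq (r : ℕ) : (σ ^ r) (a ^ i * ∑ j ∈ range (i + 1), b ^ j) * b ^ r =
      a ^ i * ((b ^ (i + 1)) ^ r * ∑ j ∈ range (i + 1), b ^ j) := by
    have hcomm : Commute (∑ j ∈ range (i + 1), b ^ j) (b ^ r) :=
      Commute.sum_left _ _ _ fun j _ => Commute.pow_pow_self b j r
    have hσa : (σ ^ r) a = a * b ^ r := by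
      rw [RingHom.coe_pow, iterate_apply_of_map_eq_mul ha hb]
    have hσb : (σ ^ r) b = b := by
      rw [RingHom.coe_pow, Function.iterate_fixed hb]
    simp only [map_mul, map_pow, map_sum, hσa, hσb]
    calc (a * b ^ r) ^ i * (∑ j ∈ range (i + 1), b ^ j) * b ^ r
        = a ^ i * ((b ^ r) ^ i * b ^ r * ∑ j ∈ range (i + 1), b ^ j) := by
          rw [(hab.pow_right r).mul_pow, mul_assoc, hcomm.eq, mul_assoc, mul_assoc]
      _ = a ^ i * ((b ^ (i + 1)) ^ r * ∑ j ∈ range (i + 1), b ^ j) := by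
          rw [← pow_succ, pow_right_comm]
  calc ∑ r ∈ range m, (σ ^ r) (a ^ i * ∑ j ∈ range (i + 1), b ^ j) * b ^ r
      = a ^ i * ((∑ r ∈ range m, (b ^ (i + 1)) ^ r) * ∑ j ∈ range (i + 1), b ^ j) := by
        simp only [summand_eq, ← mul_sum, ← sum_mul]
    _ = (i + 1) • a ^ i * ∑ k ∈ range m, b ^ k := by
        rw [geom_sum_pow_mul_geom_sum_of_pow_eq_one hbm, mul_smul_comm, smul_mul_assoc]

theorem stmt12_general {σ : A →+* A} (hab : Commute a b) (hbm : b ^ m = 1)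
    (ha : σ a = a * b) (hb : σ b = b) (s : Finset ℕ) :
    ∑ r ∈ range m, (σ ^ r) (∑ i ∈ s, a ^ i * ∑ j ∈ range (i + 1), b ^ j) * b ^ r =
      (∑ i ∈ s, (i + 1) • a ^ i) * ∑ k ∈ range m, b ^ k := by
  simp only [map_sum, sum_mul]
  rw [sum_comm]
  simp only [← sum_mul, sum_pow_apply_pow_mul_geom_sum_mul_pow hab hbm ha hb]

end Semiring

section GroupAlgebra

theorem bEl_pow_eq_one : bEl K q ^ q = 1 := by
  have hq : q • ((0, 1) : ZMod q × ZMod q) = 0 := by simp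
  rw [bEl, ← map_pow, ← ofAdd_nsmul, hq, ofAdd_zero, map_one]

theorem ρEl_eq_sum_mul_geom_sum :
    ρEl K q = ∑ i ∈ range q, aEl K q ^ i * ∑ j ∈ range (i + 1), bEl K q ^ j := by
  simp only [ρEl, mul_sum]
  refine sum_finset_product' _ (range q) (fun i => range (i + 1)) (fun ij => ?_)
    (f := fun i j => aEl K q ^ i * bEl K q ^ j)
  simp only [mem_filter, mem_product, mem_range]
  omega

theorem κEl_eq_sum_nsmul : κEl K q = ∑ i ∈ range q, (i + 1) • aEl K q ^ i := by
  simp only [κEl, ← Nat.cast_smul_eq_nsmul K, Nat.cast_succ]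

variable {K q}

theorem map_aEl {σ : GrpAlg K q → GrpAlg K q}
    (hσ : ∀ i j : ZMod q, σ (of K (Mgrp q) (Multiplicative.ofAdd (i, j))) =
      of K (Mgrp q) (Multiplicative.ofAdd (i, i + j))) :
    σ (aEl K q) = aEl K q * bEl K q := by
  rw [aEl, bEl, hσ, ← map_mul, ← ofAdd_add, Prod.mk_add_mk, add_zero, zero_add]

theorem map_bEl {σ : GrpAlg K q → GrpAlg K q}
    (hσ : ∀ i j : ZMod q, σ (of K (Mgrp q) (Multiplicative.ofAdd (i, j))) =
      of K (Mgrp q) (Multiplicative.ofAdd (i, i + j))) :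
    σ (bEl K q) = bEl K q := by
  rw [bEl, hσ, zero_add]

end GroupAlgebra

/-- let `σ` be the `K`-algebra automorphism of `K[M]` induced by the group
automorphism `(i,j) ↦ (i, i+j)` of `M` (i.e. `a ↦ ab`, `b ↦ b`).  Then
`∑_{r=0}^{q−1} σ^r(ρ)·b^r = κ·N(b)`. -/
theorem stmt12 (p n : ℕ) (hp : p.Prime) (hodd : Odd p) (hn : 2 ≤ n)
    (hchar : CharP K p) (hq : q = p ^ n)
    (σ : GrpAlg K q ≃ₐ[K] GrpAlg K q)
    (hσ : ∀ i j : ZMod q,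
      σ (MonoidAlgebra.of K (Mgrp q) (Multiplicative.ofAdd (i, j))) =
        MonoidAlgebra.of K (Mgrp q) (Multiplicative.ofAdd (i, i + j))) :
    ∑ r ∈ range q, (σ ^ r) (ρEl K q) * bEl K q ^ r = κEl K q * Nel K q (bEl K q) := by
  rw [ρEl_eq_sum_mul_geom_sum, κEl_eq_sum_nsmul, Nel]
  simpa only [RingHom.coe_pow, AlgEquiv.coe_pow, RingHom.coe_coe] using
    stmt12_general (σ := (σ : GrpAlg K q →+* GrpAlg K q)) (Commute.all _ _)
      (bEl_pow_eq_one K q) (map_aEl hσ) (map_bEl hσ) (range q)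
end
end
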